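/- arXiv:2203.11982 — 3 statements merged into one kernel-verified Lean document; each statement's English description precedes it below -/
import Mathlib

section
/- Let Λ be a lattice in ℂ with complex multiplication by R such that g₂(Λ) and g₃(Λ) are algebraic over ℚ. Then for every nonzero fractional ideal 𝔞 of 𝓞_K, both g₂(𝔞·Λ) and g₃(𝔞·Λ) are algebraic over ℚ. -/
open NumberField

/-- The Eisenstein series `g₂` of an additive subgroup of `ℂ`. -/
noncomputable def g₂ (Λ : AddSubgroup ℂ) : ℂ :=
  60 * ∑' w : {w : ℂ // w ∈ Λ ∧ w ≠ 0}, ((w : ℂ) ^ 4)⁻¹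

/-- The Eisenstein series `g₃` of an additive subgroup of `ℂ`. -/
noncomputable def g₃ (Λ : AddSubgroup ℂ) : ℂ :=
  140 * ∑' w : {w : ℂ // w ∈ Λ ∧ w ≠ 0}, ((w : ℂ) ^ 6)⁻¹

/-- For a fractional ideal `𝔞` of `𝓞 K` and a subset `S ⊆ ℂ`, the additive subgroup `𝔞·S`
of `ℂ` generated by the products `τ(a)·s` for `a ∈ 𝔞`, `s ∈ S`. -/
noncomputable def idealMul {K : Type*} [Field K] [NumberField K] (τ : K →+* ℂ)
    (𝔞 : FractionalIdeal (nonZeroDivisors (𝓞 K)) K) (S : Set ℂ) : AddSubgroup ℂ :=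
  AddSubgroup.closure {x : ℂ | ∃ a ∈ 𝔞, ∃ s ∈ S, x = τ a * s}


section Helpers

open Polynomial

/-- algebraic numbers -/
noncomputable abbrev AA : IntermediateField ℚ ℂ := algebraicClosure ℚ ℂ

lemma pow_sums_aux {κ ι : Type*} [Field κ] [CharZero κ] [Fintype ι] (ξ : ι → κ)
    (h : ∀ m : ℕ, ∑ i, ξ i ^ (m + 2) = 0) (i₀ : ι) : ξ i₀ ≠ 1 := by
  classical
  intro h1
  have hq : ∀ q : κ[X], ∑ i, ξ i ^ 2 * q.eval (ξ i) = 0 := by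
    intro q
    simp only [eval_eq_sum_range, Finset.mul_sum]
    rw [Finset.sum_comm]
    refine Finset.sum_eq_zero fun j _ => ?_
    have := h j
    calc _ = q.coeff j * ∑ i, ξ i ^ (j + 2) := by
          rw [Finset.mul_sum]; exact Finset.sum_congr rfl fun i _ => by ring
      _ = 0 := by rw [this, mul_zero]
  set S := (Finset.univ.image ξ).erase 1
  have := hq (∏ c ∈ S, (X - C c))
  have h2 : ∀ i, ξ i ^ 2 * (∏ c ∈ S, (X - C c)).eval (ξ i) =
      if ξ i = 1 then (∏ c ∈ S, (1 - c)) else 0 := by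
    intro i
    split_ifs with hi
    · simp [hi, eval_prod]
    · rw [eval_prod, Finset.prod_eq_zero (i := ξ i)]
      · simp
      · simp [S, hi]
      · simp
  simp only [h2] at this
  rw [← Finset.sum_filter, Finset.sum_const, nsmul_eq_mul, mul_eq_zero] at this
  rcases this with h3 | h3
  · rw [Nat.cast_eq_zero, Finset.card_eq_zero] at h3
    have : i₀ ∈ Finset.univ.filter (fun i => ξ i = 1) := by simp [h1]
    simp [h3] at this
  · rw [Finset.prod_eq_zero_iff] at h3
    obtain ⟨c, hc, h4⟩ := h3
    have : c = 1 := by linear_combination -h4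
    simp [S, this] at hc

lemma alg_of_sums {ι : Type*} [Fintype ι] (x : ι → ℂ) (P : ℕ → AA[X])
    (hdeg : ∀ m, (P m).natDegree = m + 2)
    (hsum : ∀ m, ∑ i, aeval (x i) (P m) ∈ AA) (j : ι) : x j ∈ AA := by
  by_contra hj
  have : IsIntegrallyClosedIn AA.toSubring ℂ := by
    rw [Subring.isIntegrallyClosedIn_iff]
    intro z hz
    have hz' : IsAlgebraic AA z := by
      have : IsIntegral AA z := hz
      exact this.isAlgebraic
    have hAA : Algebra.IsAlgebraic ℚ AA := algebraicClosure.isAlgebraic ℚ ℂ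
    have h2 : IsAlgebraic ℚ z := IsAlgebraic.restrictScalars ℚ hz'
    exact (mem_algebraicClosure_iff).2 h2
  obtain ⟨V, hAV, hjV⟩ := Subring.exists_le_valuationSubring_of_isIntegrallyClosedIn
    (R := AA.toSubring) (x := x j) hj
  have : Nonempty ι := ⟨j⟩
  obtain ⟨i₀, hi₀⟩ := Finite.exists_max (fun i => V.valuation (x i))
  have hA : ∀ a : AA, (a : ℂ) ∈ V := fun a => hAV a.2
  let f : AA →+* V := 
    { toFun := fun a => ⟨a, hA a⟩
      map_one' := rfl
      map_zero' := rfl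
      map_add' := fun _ _ => rfl
      map_mul' := fun _ _ => rfl }
  let r := IsLocalRing.residue V
  let fr := r.comp f
  have hchar : CharZero (IsLocalRing.ResidueField V) := charZero_of_injective_ringHom fr.injective
  have hg1 : 1 < V.valuation (x i₀) := by
    refine lt_of_lt_of_le ?_ (hi₀ j)
    rw [← not_le, V.valuation_le_one_iff]
    exact hjV
  have hg0 : x i₀ ≠ 0 := by
    intro h; simp [h] at hg1
  have hy : ∀ i, x i / x i₀ ∈ V := by
    intro i
    rw [← V.valuation_le_one_iff, map_div₀]
    exact div_le_one_of_le₀ (hi₀ i) zero_le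
  have ht : V.valuation ((x i₀)⁻¹) < 1 := by
    rw [map_inv₀]; exact inv_lt_one_of_one_lt₀ hg1
  let y : ι → V := fun i => ⟨x i / x i₀, hy i⟩
  let t : V := ⟨(x i₀)⁻¹, (V.valuation_le_one_iff _).1 ht.le⟩
  have hrt : r t = 0 := by
    rw [IsLocalRing.residue_eq_zero_iff]
    rw [V.valuation_lt_one_iff]
    exact ht
  refine pow_sums_aux (fun i => r (y i)) ?_ i₀ ?_
  · intro m
    have key : ∑ i, ∑ k ∈ Finset.range (m + 3), f ((P m).coeff k) * t ^ (m + 2 - k) * y i ^ k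
        = f ⟨_, hsum m⟩ * t ^ (m + 2) := by
      apply Subtype.ext
      push_cast
      change ∑ i, ∑ k ∈ Finset.range (m + 3), ((P m).coeff k : ℂ) * (x i₀)⁻¹ ^ (m + 2 - k) * (x i / x i₀) ^ k = (∑ i, aeval (x i) (P m)) * (x i₀)⁻¹ ^ (m + 2)
      rw [Finset.sum_mul]
      refine Finset.sum_congr rfl fun i _ => ?_
      rw [aeval_eq_sum_range, hdeg, Finset.sum_mul]
      refine Finset.sum_congr rfl fun k hk => ?_
      have hk' : m + 2 = (m + 2 - k) + k := by
        have := Finset.mem_range.1 hk; omega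
      conv_rhs => rw [hk', pow_add]
      rw [div_eq_mul_inv, mul_pow]
      change _ = ((P m).coeff k : ℂ) * _ * _
      ring
    have key2 := congrArg r key
    simp only [map_sum, map_mul, map_pow, hrt] at key2
    rw [zero_pow (by omega), mul_zero] at key2
    have : ∀ i, ∑ k ∈ Finset.range (m + 3), r (f ((P m).coeff k)) * 0 ^ (m + 2 - k) * r (y i) ^ k
        = r (f ((P m).coeff (m+2))) * r (y i) ^ (m + 2) := by
      intro i
      rw [Finset.sum_range_succ, Finset.sum_eq_zero]
      · simp
      · intro k hk
        have := Finset.mem_range.1 hk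
        rw [zero_pow (by omega)]; ring
    simp only [this] at key2
    rw [← Finset.mul_sum] at key2
    refine (mul_eq_zero.1 key2).resolve_left ?_
    change fr _ ≠ 0
    rw [_root_.map_ne_zero, ← hdeg m]
    change (P m).leadingCoeff ≠ 0
    rw [leadingCoeff_ne_zero]
    intro h
    have := hdeg m
    simp [h] at this
  · have : y i₀ = 1 := Subtype.ext (div_self hg0)
    simp [this]
section ana
open PeriodPair
variable (L : PeriodPair)

lemma wp_hasDerivAt {z : ℂ} (hz : z ∉ L.lattice) :
    HasDerivAt L.weierstrassP (L.derivWeierstrassP z) z := by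
  rw [← L.deriv_weierstrassP]
  exact (L.analyticOnNhd_weierstrassP z hz).differentiableAt.hasDerivAt

lemma wp'_hasDerivAt {z : ℂ} (hz : z ∉ L.lattice) :
    HasDerivAt L.derivWeierstrassP (deriv L.derivWeierstrassP z) z :=
  (L.analyticOnNhd_derivWeierstrassP z hz).differentiableAt.hasDerivAt

lemma wp'_not_zero : ¬ ∀ z ∈ (L.lattice : Set ℂ)ᶜ, L.derivWeierstrassP z = 0 := by
  intro h
  have h1 : ∀ᶠ z in nhdsWithin (0:ℂ) {0}ᶜ, L.derivWeierstrassPExcept 0 z * z ^ 3 = 2 := by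
    filter_upwards [self_mem_nhdsWithin, mem_nhdsWithin_of_mem_nhds
      (L.compl_lattice_sdiff_singleton_mem_nhds 0)] with z hz hz'
    have hz0 : z ≠ 0 := hz
    have hzL : z ∉ L.lattice := by simp_all
    have := L.derivWeierstrassPExcept_def 0 z
    rw [h z hzL] at this
    simp only [ZeroMemClass.coe_zero, sub_zero] at this
    rw [this]
    field_simp
    ring
  have h2 : Filter.Tendsto (fun z => L.derivWeierstrassPExcept 0 z * z ^ 3)
      (nhdsWithin (0:ℂ) {0}ᶜ) (nhds (L.derivWeierstrassPExcept 0 0 * 0 ^ 3)) := by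
    have : ContinuousAt (fun z => L.derivWeierstrassPExcept 0 z * z ^ 3) 0 :=
      (L.analyticAt_derivWeierstrassPExcept 0).continuousAt.mul (by fun_prop)
    exact this.tendsto.mono_left nhdsWithin_le_nhds
  have h3 := tendsto_nhds_unique (h2.congr' h1) tendsto_const_nhds
  simp at h3

lemma wp_deriv2 {z : ℂ} (hz : z ∉ L.lattice) :
    deriv L.derivWeierstrassP z = 6 * L.weierstrassP z ^ 2 - L.g₂ / 2 := by
  have hopen : IsOpen (L.lattice : Set ℂ)ᶜ := L.isClosed_lattice.isOpen_compl
  have hpre : IsPreconnected (L.lattice : Set ℂ)ᶜ := by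
    refine (Set.Countable.isPathConnected_compl_of_one_lt_rank (by simp) ?_).isConnected.isPreconnected
    have : Countable L.lattice := L.latticeEquivProd.toEquiv.countable_iff.2 inferInstance
    exact Set.countable_coe_iff.1 this
  have h := AnalyticOnNhd.eq_zero_or_eq_zero_of_mul_eq_zero (𝕜 := ℂ) (A := ℂ)
    (f := L.derivWeierstrassP)
    (g := fun z => deriv L.derivWeierstrassP z - 6 * L.weierstrassP z ^ 2 + L.g₂ / 2)
    (U := (L.lattice : Set ℂ)ᶜ) L.analyticOnNhd_derivWeierstrassP ?_ ?_ hpre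
  · have := (h.resolve_left (wp'_not_zero L)) z hz
    linear_combination this
  · intro w hw
    have h1 := L.analyticOnNhd_weierstrassP w hw
    have h2 := (L.analyticOnNhd_derivWeierstrassP w hw).deriv
    fun_prop
  · intro w hw
    have e1 := (wp'_hasDerivAt L hw).pow 2
    have e2 := ((((wp_hasDerivAt L hw).pow 3).const_mul 4).sub
      ((wp_hasDerivAt L hw).const_mul L.g₂)).sub_const L.g₃
    have := e1.congr_of_eventuallyEq (f₁ := fun z => 4 * L.weierstrassP z ^ 3 - L.g₂ * L.weierstrassP z - L.g₃) ?_
    · have := this.unique e2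
      simp only [Nat.cast_ofNat] at this
      linear_combination (1/2) * this
    · filter_upwards [hopen.mem_nhds hw] with v hv
      exact (L.derivWeierstrassP_sq v hv).symm

lemma exists_poly (h2 : L.g₂ ∈ AA) (h3 : L.g₃ ∈ AA) (m : ℕ) : ∃ P : AA[X],
    P.natDegree = m + 2 ∧ ∀ z ∉ L.lattice, iteratedDeriv (2 * m + 2) L.weierstrassP z =
      aeval (L.weierstrassP z) P := by
  have hopen : IsOpen (L.lattice : Set ℂ)ᶜ := L.isClosed_lattice.isOpen_compl
  have h2' : L.g₂ / 2 ∈ AA := div_mem h2 (ofNat_mem AA 2)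
  induction m with
  | zero =>
    refine ⟨6 * X ^ 2 - C ⟨_, h2'⟩, ?_, ?_⟩
    · compute_degree!
    · intro z hz
      simp only [mul_zero, zero_add]
      rw [iteratedDeriv_succ, iteratedDeriv_one, L.deriv_weierstrassP, wp_deriv2 L hz]
      simp
      left
      exact (map_ofNat (aeval (L.weierstrassP z)) 6).symm
  | succ m ih =>
    obtain ⟨P, hP, hz⟩ := ih
    set A : AA[X] := 4 * X ^ 3 - C ⟨_, h2⟩ * X - C ⟨_, h3⟩ with hA
    set B : AA[X] := 6 * X ^ 2 - C ⟨_, h2'⟩ with hB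
    have hAe : ∀ w, aeval w A = 4 * w ^ 3 - L.g₂ * w - L.g₃ := by
      intro w; simp [hA]; left; exact map_ofNat (aeval w) 4
    have hBe : ∀ w, aeval w B = 6 * w ^ 2 - L.g₂ / 2 := by
      intro w; simp [hB]; left; exact map_ofNat (aeval w) 6
    refine ⟨derivative (derivative P) * A + derivative P * B, ?_, ?_⟩
    · have d1 : (derivative P).natDegree ≤ m + 1 := by
        have := natDegree_derivative_le P; omega
      have d2 : (derivative (derivative P)).natDegree ≤ m := by
        have := natDegree_derivative_le (derivative P); omega
      have a1 : A.natDegree ≤ 3 := by rw [hA]; compute_degree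
      have b1 : B.natDegree ≤ 2 := by rw [hB]; compute_degree
      have ac : A.coeff 3 = 4 := by rw [hA]; compute_degree!
      have bc : B.coeff 2 = 6 := by rw [hB]; compute_degree!
      refine natDegree_eq_of_le_of_coeff_ne_zero ?_ ?_
      · refine natDegree_add_le_of_degree_le ?_ ?_
        · exact (natDegree_mul_le_of_le d2 a1).trans (by omega)
        · exact (natDegree_mul_le_of_le d1 b1).trans (by omega)
      · rw [coeff_add]
        have e1 := coeff_mul_add_eq_of_natDegree_le d2 a1
        have e2 := coeff_mul_add_eq_of_natDegree_le d1 b1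
        rw [show m + 1 + 2 = m + 3 by ring]
        rw [show m + 1 + 2 = m + 3 by ring] at e2
        rw [e1, e2, ac, bc, coeff_derivative, coeff_derivative]
        have hlc : P.coeff (m + 1 + 1) ≠ 0 := by
          rw [show m + 1 + 1 = P.natDegree by omega]
          change P.leadingCoeff ≠ 0
          rw [leadingCoeff_ne_zero]
          rintro rfl
          simp at hP
        have : P.coeff (m+1+1) * (((m+1 : ℕ) : AA) + 1) * ((m : AA) + 1) * 4 + P.coeff (m+1+1) * (((m+1:ℕ) : AA) + 1) * 6
          = P.coeff (m+1+1) * (((m + 2) * ((m + 1) * 4 + 6) : ℕ) : AA) := by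
          push_cast; ring
        rw [this]
        exact mul_ne_zero hlc (Nat.cast_ne_zero.2 (by positivity))
    · intro z hzL
      rw [show 2 * (m + 1) + 2 = (2 * m + 2) + 1 + 1 by ring, iteratedDeriv_succ, iteratedDeriv_succ]
      have e1 : ∀ w ∉ L.lattice, deriv (iteratedDeriv (2 * m + 2) L.weierstrassP) w =
          aeval (L.weierstrassP w) (derivative P) * L.derivWeierstrassP w := by
        intro w hw
        have : iteratedDeriv (2 * m + 2) L.weierstrassP =ᶠ[nhds w] fun v => aeval (L.weierstrassP v) P := by
          filter_upwards [hopen.mem_nhds hw] with v hv using hz v hv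
        rw [this.deriv_eq]
        exact ((P.hasDerivAt_aeval (L.weierstrassP w)).comp w (wp_hasDerivAt L hw)).deriv
      have e2 : deriv (iteratedDeriv (2 * m + 2) L.weierstrassP) =ᶠ[nhds z] fun w => aeval (L.weierstrassP w) (derivative P) * L.derivWeierstrassP w := by
        filter_upwards [hopen.mem_nhds hzL] with v hv using e1 v hv
      rw [e2.deriv_eq]
      have := (((derivative P).hasDerivAt_aeval (L.weierstrassP z)).comp z (wp_hasDerivAt L hzL)).mul (wp'_hasDerivAt L hzL)
      refine this.deriv.trans ?_
      rw [wp_deriv2 L hzL, map_add, map_mul, map_mul, hAe, hBe, ← L.derivWeierstrassP_sq z hzL]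
      simp only [Function.comp_apply]
      ring

lemma G_alg (h2 : L.g₂ ∈ AA) (h3 : L.g₃ ∈ AA) (n : ℕ) :
    iteratedDeriv n (L.weierstrassPExcept 0) 0 ∈ AA := by
  set h := L.weierstrassPExcept 0 with hh
  have han : AnalyticAt ℂ h 0 := L.analyticAt_weierstrassPExcept 0
  have ode : (fun z => z ^ 2 * iteratedDeriv 2 h z) =ᶠ[nhds 0]
      fun z => z ^ 2 * (6 * (h z * h z) - L.g₂ / 2) + 12 * h z := by
    filter_upwards [L.compl_lattice_sdiff_singleton_mem_nhds 0] with z hz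
    by_cases hz0 : z = 0
    · simp [hz0, hh]
    have hzL : z ∉ L.lattice := by simp_all
    have hopen : IsOpen ((L.lattice : Set ℂ)ᶜ) := L.isClosed_lattice.isOpen_compl
    have e0 : ∀ w ∉ L.lattice, h w = L.weierstrassP w - w ^ (-2 : ℤ) := by
      intro w hw
      have := L.weierstrassPExcept_def 0 w
      simp only [ZeroMemClass.coe_zero, sub_zero] at this
      rw [hh, this]
      simp [zpow_neg]; rfl
    have e1 : ∀ w ∉ L.lattice, deriv h w = L.derivWeierstrassP w + 2 * w ^ (-3 : ℤ) := by
      intro w hw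
      have hw0 : w ≠ 0 := by rintro rfl; exact hw (zero_mem _)
      have : h =ᶠ[nhds w] fun v => L.weierstrassP v - v ^ (-2 : ℤ) := by
        filter_upwards [hopen.mem_nhds hw] with v hv using e0 v hv
      rw [this.deriv_eq]
      have := ((wp_hasDerivAt L hw).sub (hasDerivAt_zpow (-2) w (Or.inl hw0))).deriv
      refine this.trans ?_
      norm_num
    have e2 : iteratedDeriv 2 h z = deriv L.derivWeierstrassP z - 6 * z ^ (-4 : ℤ) := by
      rw [iteratedDeriv_succ, iteratedDeriv_one]
      have : deriv h =ᶠ[nhds z] fun v => L.derivWeierstrassP v + 2 * v ^ (-3 : ℤ) := by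
        filter_upwards [hopen.mem_nhds hzL] with v hv using e1 v hv
      rw [this.deriv_eq]
      have := ((wp'_hasDerivAt L hzL).add ((hasDerivAt_zpow (-3) z (Or.inl hz0)).const_mul 2)).deriv
      refine this.trans ?_
      norm_num
      ring
    rw [e2, wp_deriv2 L hzL, e0 z hzL]
    simp only [zpow_neg]
    norm_cast
    field_simp
    ring
  have val : ∀ k, k ≠ 0 → iteratedDeriv k h 0 = ((k + 1).factorial : ℂ) * L.G (k + 2) := by
    intro k hk
    have := L.iteratedDeriv_weierstrassPExcept_self 0 (n := k)
    rw [if_neg hk, L.sumInvPow_zero] at this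
    exact this
  induction n using Nat.strong_induction_on with
  | _ n ih =>
  rcases Nat.lt_or_ge n 5 with hn | hn
  · interval_cases n
    · simp [hh]
    · rw [val _ (by norm_num), L.G_eq_zero_of_odd _ (by decide)]; simp
    · rw [val _ (by norm_num)]
      have : L.G 4 = L.g₂ / 60 := by simp [PeriodPair.g₂]
      rw [this]
      exact mul_mem (natCast_mem _ _) (div_mem h2 (ofNat_mem AA 60))
    · rw [val _ (by norm_num), L.G_eq_zero_of_odd _ (by decide)]; simp
    · rw [val _ (by norm_num)]
      have : L.G 6 = L.g₃ / 140 := by simp [PeriodPair.g₃]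
      rw [this]
      exact mul_mem (natCast_mem _ _) (div_mem h3 (ofNat_mem AA 140))
  · obtain ⟨m, rfl⟩ : ∃ m, n = m + 5 := ⟨n - 5, by omega⟩
    have sq : ∀ f : ℂ → ℂ, AnalyticAt ℂ f 0 → iteratedDeriv (m + 5) (fun z => z ^ 2 * f z) 0 =
        (((m + 5) * (m + 4) : ℕ) : ℂ) * iteratedDeriv (m + 3) f 0 := by
      intro f hf
      rw [iteratedDeriv_fun_mul (by fun_prop) hf.contDiffAt]
      rw [Finset.sum_eq_single 2]
      · rw [iteratedDeriv_fun_pow_zero]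
        simp
        left
        have := Nat.choose_two_right (m + 5)
        have e : 2 * (m+5).choose 2 = (m+5) * (m+4) := by
          have := Nat.triangle_succ (m+4)
          rw [Nat.choose_two_right, Nat.mul_div_cancel' ]
          · rfl
          · exact (Nat.even_mul_pred_self (m+5)).two_dvd
        have e' : (2 : ℂ) * ((m+5).choose 2 : ℂ) = (m+5) * (m+4) := by exact_mod_cast e
        linear_combination e'
      · intro b _ hb
        rw [iteratedDeriv_fun_pow_zero, if_neg (by omega)]
        simp
      · intro hb; simp at hb
    have e := ode.iteratedDeriv_eq (m + 5)
    have hand : AnalyticAt ℂ (iteratedDeriv 2 h) 0 := by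
      rw [iteratedDeriv_succ, iteratedDeriv_one]
      exact han.deriv.deriv
    rw [sq _ hand, iteratedDeriv_fun_add (by apply AnalyticAt.contDiffAt; fun_prop) (by apply AnalyticAt.contDiffAt; fun_prop), sq _ (by fun_prop), iteratedDeriv_const_mul_field,
      iteratedDeriv_fun_sub (by apply AnalyticAt.contDiffAt; fun_prop) (by fun_prop), iteratedDeriv_const_mul_field,
      iteratedDeriv_fun_mul han.contDiffAt han.contDiffAt, iteratedDeriv_const] at e
    have e2 : iteratedDeriv (m + 3) (iteratedDeriv 2 h) 0 = iteratedDeriv (m + 5) h 0 := by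
      simp only [iteratedDeriv_eq_iterate, ← Function.iterate_add_apply]
    rw [e2] at e
    simp only [Nat.add_eq_zero_iff, OfNat.ofNat_ne_zero, and_false, if_false, sub_zero] at e
    set S := ∑ i ∈ Finset.range (m + 3 + 1), ((m+3).choose i : ℂ) * iteratedDeriv i h 0 * iteratedDeriv (m + 3 - i) h 0 with hS
    have hSm : S ∈ AA := by
      refine sum_mem fun i hi => ?_
      have := Finset.mem_range.1 hi
      exact mul_mem (mul_mem (natCast_mem _ _) (ih _ (by omega))) (ih _ (by omega))
    have hc : (((m + 5) * (m + 4) : ℕ) : ℂ) - 12 = ((m^2 + 9 * m + 8 : ℕ) : ℂ) := by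
      push_cast; ring
    have hc0 : ((m^2 + 9 * m + 8 : ℕ) : ℂ) ≠ 0 := Nat.cast_ne_zero.2 (by positivity)
    have : iteratedDeriv (m + 5) h 0 = (((m + 5) * (m + 4) : ℕ) : ℂ) * (6 * S) / ((m^2 + 9 * m + 8 : ℕ) : ℂ) := by
      rw [eq_div_iff hc0, ← hc]
      linear_combination e
    rw [this]
    exact div_mem (mul_mem (natCast_mem _ _) (mul_mem (ofNat_mem AA 6) hSm)) (natCast_mem _ _)

lemma sumInvPow_poly {u : ℂ} (hu : u ∉ L.lattice) (m : ℕ) :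
    iteratedDeriv (2 * m + 2) L.weierstrassP u = ((2 * m + 3).factorial : ℂ) * L.sumInvPow u (2 * m + 4) := by
  have := L.iteratedDeriv_weierstrassPExcept_self u (n := 2 * m + 2)
  rw [L.weierstrassPExcept_of_notMem u hu, if_neg (by omega)] at this
  exact this

lemma G_alg' (h2 : L.g₂ ∈ AA) (h3 : L.g₃ ∈ AA) (m : ℕ) : L.G (2 * m + 4) ∈ AA := by
  have := L.iteratedDeriv_weierstrassPExcept_self 0 (n := 2 * m + 2)
  rw [if_neg (by omega), L.sumInvPow_zero] at this
  have h := G_alg L h2 h3 (2 * m + 2)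
  rw [this] at h
  have hf : ((2 * m + 3).factorial : ℂ) ≠ 0 := Nat.cast_ne_zero.2 (Nat.factorial_ne_zero _)
  have := div_mem h (natCast_mem AA ((2 * m + 3).factorial))
  rwa [mul_div_cancel_left₀ _ hf] at this

end ana

section lat
variable (L : PeriodPair)

lemma split_sum (M : AddSubgroup ℂ) (hLM : ∀ x ∈ L.lattice, x ∈ M) (N : ℤ) (hN0 : N ≠ 0)
    (hN : ∀ x ∈ M, (N : ℂ) * x ∈ L.lattice) :
    ∃ (ι : Type) (_ : Fintype ι) (rep : ι → ℂ), (∀ i, rep i ∈ M ∧ rep i ∉ L.lattice) ∧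
      (∀ u ∈ M, u ∉ L.lattice → ∃ i, ∃ l : L.lattice, u = rep i + l) ∧
      ∀ r, 2 < r → ∑' w : M, ((w : ℂ) ^ r)⁻¹ = L.G r + ∑ i, L.sumInvPow (rep i) r := by
  classical
  let H : AddSubgroup M := (L.lattice.toAddSubgroup).addSubgroupOf M
  have memH : ∀ x : M, x ∈ H ↔ (x : ℂ) ∈ L.lattice := fun x => Iff.rfl
  have hfinM : Module.Finite ℤ M := by
    let f : M →ₗ[ℤ] L.lattice := 
      AddMonoidHom.toIntLinearMap
        { toFun := fun x => ⟨(N : ℂ) * x, hN x x.2⟩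
          map_zero' := by simp
          map_add' := fun x y => Subtype.ext (by simp [mul_add]) }
    refine Module.Finite.of_injective f ?_
    intro x y hxy
    have : (N : ℂ) * x = N * y := congrArg Subtype.val hxy
    exact Subtype.ext (mul_left_cancel₀ (Int.cast_ne_zero.2 hN0) this)
  have hfinQ : Module.Finite ℤ (M ⧸ H) :=
    Module.Finite.of_surjective (QuotientAddGroup.mk' H).toIntLinearMap
      (QuotientAddGroup.mk'_surjective H)
  have hfin : Finite (M ⧸ H) := by
    refine Module.finite_of_fg_torsion (M ⧸ H) ?_
    intro q
    refine ⟨⟨N, mem_nonZeroDivisors_of_ne_zero hN0⟩, ?_⟩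
    obtain ⟨x, rfl⟩ := QuotientAddGroup.mk'_surjective H q
    change N • (QuotientAddGroup.mk' H x) = 0
    rw [← map_zsmul]
    change ((N • x : M) : M ⧸ H) = 0
    rw [QuotientAddGroup.eq_zero_iff, memH]
    have := hN x x.2
    simpa using this
  have : Fintype (M ⧸ H) := Fintype.ofFinite _
  let s : M ⧸ H → M := fun q => if q = 0 then 0 else q.out
  have hs0 : s 0 = 0 := by simp [s]
  have hs : ∀ q, (s q : M ⧸ H) = q := by
    intro q
    by_cases hq : q = 0
    · simp [s, hq]
    · simp [s, hq]
  have hsne : ∀ q, q ≠ 0 → (s q : ℂ) ∉ L.lattice := by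
    intro q hq h
    rw [← memH, ← QuotientAddGroup.eq_zero_iff, hs] at h
    exact hq h
  let φ : (M ⧸ H) × L.lattice → M := fun p => s p.1 + ⟨p.2, hLM _ p.2.2⟩
  have hφ1 : ∀ p, (φ p : M ⧸ H) = p.1 := by
    intro p
    change ((s p.1 + ⟨p.2, hLM _ p.2.2⟩ : M) : M ⧸ H) = p.1
    rw [QuotientAddGroup.mk_add, hs]
    have : ((⟨p.2, hLM _ p.2.2⟩ : M) : M ⧸ H) = 0 := by
      rw [QuotientAddGroup.eq_zero_iff, memH]; exact p.2.2
    rw [this, add_zero]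
  have hφ : Function.Bijective φ := by
    constructor
    · intro p p' h
      have h1 : p.1 = p'.1 := by rw [← hφ1 p, ← hφ1 p', h]
      have h2 : (p.2 : ℂ) = p'.2 := by
        have := congrArg (Subtype.val) h
        simp only [φ, AddSubgroup.coe_add, h1] at this
        exact add_left_cancel this
      exact Prod.ext h1 (Subtype.ext h2)
    · intro x
      have : x - s (x : M ⧸ H) ∈ H := by
        rw [← QuotientAddGroup.eq_zero_iff, QuotientAddGroup.mk_sub, hs, sub_self]
      rw [memH] at this
      refine ⟨((x : M ⧸ H), ⟨_, this⟩), Subtype.ext ?_⟩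
      simp [φ]
  let e := Equiv.ofBijective φ hφ
  refine ⟨{q : M ⧸ H // q ≠ 0}, inferInstance, fun q => -(s q.1 : ℂ), ?_, ?_, ?_⟩
  · intro q
    exact ⟨neg_mem (s q.1).2, fun h => hsne q.1 q.2 (by simpa using neg_mem h)⟩
  · intro u hu huL
    set v : M := ⟨-u, neg_mem hu⟩ with hv
    have hvne : (v : M ⧸ H) ≠ 0 := by
      intro h
      rw [QuotientAddGroup.eq_zero_iff, memH] at h
      exact huL (by simpa [hv] using neg_mem h)
    have : s (v : M ⧸ H) - v ∈ H := by
      rw [← QuotientAddGroup.eq_zero_iff, QuotientAddGroup.mk_sub, hs, sub_self]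
    rw [memH] at this
    refine ⟨⟨_, hvne⟩, ⟨_, this⟩, ?_⟩
    simp [hv]
  · intro r hr
    have hsum : ∀ q : M ⧸ H, HasSum (fun l : L.lattice => ((φ (q, l) : ℂ) ^ r)⁻¹)
        (L.sumInvPow (-(s q : ℂ)) r) := by
      intro q
      have := L.hasSum_sumInvPow (-(s q : ℂ)) hr
      refine this.congr_fun ?_ |> fun h => h
      intro l
      simp [φ, add_comm]
    have h1 : HasSum (fun p : (M ⧸ H) × L.lattice => ((φ p : ℂ) ^ r)⁻¹)
        (∑ q, L.sumInvPow (-(s q : ℂ)) r) := by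
      have hsm : Summable (fun p : (M ⧸ H) × L.lattice => ((φ p : ℂ) ^ r)⁻¹) := by
        apply Summable.of_norm
        rw [summable_prod_of_nonneg (fun _ => norm_nonneg _)]
        exact ⟨fun q => (hsum q).summable.norm, (hasSum_fintype _).summable⟩
      have h2 := hsm.hasSum.prod_fiberwise hsum
      have h3 := h2.unique (hasSum_fintype _)
      rw [← h3]
      exact hsm.hasSum
    have h2 : HasSum (fun w : M => ((w : ℂ) ^ r)⁻¹) (∑ q, L.sumInvPow (-(s q : ℂ)) r) := by
      rw [← e.hasSum_iff]
      exact h1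
    rw [h2.tsum_eq, ← Finset.add_sum_erase _ _ (Finset.mem_univ (0 : M ⧸ H)), hs0]
    congr 1
    · simp
    · rw [Finset.sum_subtype (p := fun q => q ≠ 0)]
      simp

/-- scaling -/
lemma sum_comap (M M' : AddSubgroup ℂ) (c : ℂ) (hc : c ≠ 0) (h : ∀ z, z ∈ M' ↔ c * z ∈ M) (r : ℕ) :
    ∑' w : M', ((w : ℂ) ^ r)⁻¹ = c ^ r * ∑' w : M, ((w : ℂ) ^ r)⁻¹ := by
  let e : M' ≃ M :=
    { toFun := fun w => ⟨c * w, (h _).1 w.2⟩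
      invFun := fun w => ⟨c⁻¹ * w, (h _).2 (by rw [mul_inv_cancel_left₀ hc]; exact w.2)⟩
      left_inv := fun w => Subtype.ext (inv_mul_cancel_left₀ hc _)
      right_inv := fun w => Subtype.ext (mul_inv_cancel_left₀ hc _) }
  rw [← e.tsum_eq (fun w : M => ((w : ℂ) ^ r)⁻¹), ← tsum_mul_left]
  refine tsum_congr fun w => ?_
  change _ = c ^ r * ((c * (w : ℂ)) ^ r)⁻¹
  rw [mul_pow, mul_inv, mul_inv_cancel_left₀ (pow_ne_zero _ hc)]

lemma wp_torsion_alg (h2 : L.g₂ ∈ AA) (h3 : L.g₃ ∈ AA) (N : ℤ) (hN0 : N ≠ 0) (u : ℂ)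
    (hu : u ∉ L.lattice) (hNu : (N : ℂ) * u ∈ L.lattice) : L.weierstrassP u ∈ AA := by
  have hNc : (N : ℂ) ≠ 0 := Int.cast_ne_zero.2 hN0
  let T : AddSubgroup ℂ := L.lattice.toAddSubgroup.comap (AddMonoidHom.mulLeft (N : ℂ))
  have hT : ∀ z, z ∈ T ↔ (N : ℂ) * z ∈ L.lattice.toAddSubgroup := fun z => Iff.rfl
  obtain ⟨ι, _, rep, hrep, hcov, hsum⟩ := split_sum L T
    (fun x hx => by
      rw [hT, ← zsmul_eq_mul]
      exact zsmul_mem (show x ∈ L.lattice.toAddSubgroup from hx) N) N hN0 (fun x hx => hx)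
  choose P hPdeg hP using exists_poly L h2 h3
  have key : ∀ i, L.weierstrassP (rep i) ∈ AA := by
    intro i
    refine alg_of_sums (fun i => L.weierstrassP (rep i)) P hPdeg ?_ i
    intro m
    have e1 : ∀ i, aeval (L.weierstrassP (rep i)) (P m) =
        ((2 * m + 3).factorial : ℂ) * L.sumInvPow (rep i) (2 * m + 4) := fun i => by
      rw [← hP m _ (hrep i).2, sumInvPow_poly L (hrep i).2]
    simp only [e1, ← Finset.mul_sum]
    have e2 := hsum (2 * m + 4) (by omega)
    rw [sum_comap L.lattice.toAddSubgroup T N hNc hT] at e2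
    have e3 : ∑' w : L.lattice.toAddSubgroup, ((w : ℂ) ^ (2 * m + 4))⁻¹ = L.G (2 * m + 4) := rfl
    rw [e3] at e2
    have e4 : ∑ i, L.sumInvPow (rep i) (2 * m + 4) =
      (N : ℂ) ^ (2 * m + 4) * L.G (2 * m + 4) - L.G (2 * m + 4) := by linear_combination -e2
    rw [e4]
    have hG := G_alg' L h2 h3 m
    exact mul_mem (natCast_mem _ _) (sub_mem (mul_mem (pow_mem (intCast_mem _ _) _) hG) hG)
  obtain ⟨i, l, rfl⟩ := hcov u hNu hu
  rw [L.weierstrassP_add_coe]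
  exact key i

lemma sum_alg (h2 : L.g₂ ∈ AA) (h3 : L.g₃ ∈ AA) (M : AddSubgroup ℂ)
    (hLM : ∀ x ∈ L.lattice, x ∈ M) (N : ℤ) (hN0 : N ≠ 0)
    (hN : ∀ x ∈ M, (N : ℂ) * x ∈ L.lattice) (m : ℕ) :
    ∑' w : M, ((w : ℂ) ^ (2 * m + 4))⁻¹ ∈ AA := by
  obtain ⟨ι, _, rep, hrep, -, hsum⟩ := split_sum L M hLM N hN0 hN
  rw [hsum _ (by omega)]
  refine add_mem (G_alg' L h2 h3 m) (sum_mem fun i _ => ?_)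
  obtain ⟨P, -, hP⟩ := exists_poly L h2 h3 m
  have h := wp_torsion_alg L h2 h3 N hN0 (rep i) (hrep i).2 (hN _ (hrep i).1)
  have e := hP _ (hrep i).2
  rw [sumInvPow_poly L (hrep i).2] at e
  have hf : ((2 * m + 3).factorial : ℂ) ≠ 0 := Nat.cast_ne_zero.2 (Nat.factorial_ne_zero _)
  have hx : aeval (L.weierstrassP (rep i)) P ∈ AA := by
    have : aeval (L.weierstrassP (rep i)) P = ((aeval (⟨_, h⟩ : AA) P : AA) : ℂ) := by
      change aeval (algebraMap AA ℂ ⟨_, h⟩) P = algebraMap AA ℂ _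
      rw [aeval_algebraMap_apply]
    rw [this]
    exact Subtype.prop _
  rw [← e] at hx
  have := div_mem hx (natCast_mem AA ((2 * m + 3).factorial))
  rwa [mul_div_cancel_left₀ _ hf] at this

end lat


lemma tsum_nonzero (M : AddSubgroup ℂ) (r : ℕ) (hr : r ≠ 0) :
    ∑' w : {w : ℂ // w ∈ M ∧ w ≠ 0}, ((w : ℂ) ^ r)⁻¹ = ∑' w : M, ((w : ℂ) ^ r)⁻¹ := by
  let i : {w : ℂ // w ∈ M ∧ w ≠ 0} → M := fun w => ⟨w, w.2.1⟩
  have hi : Function.Injective i := fun a b h => Subtype.ext (congrArg (fun x : M => (x : ℂ)) h)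
  refine hi.tsum_eq (f := fun w : M => ((w : ℂ) ^ r)⁻¹) ?_
  intro w hw
  refine ⟨⟨w, w.2, ?_⟩, rfl⟩
  intro h0
  apply hw
  simp [h0, hr]

lemma exists_periodPair (Λ : AddSubgroup ℂ) (hdisc : DiscreteTopology Λ)
    (hspan : Submodule.span ℝ (Λ : Set ℂ) = ⊤) :
    ∃ L : PeriodPair, L.lattice.toAddSubgroup = Λ := by
  let S : Submodule ℤ ℂ := AddSubgroup.toIntSubmodule Λ
  have hS : DiscreteTopology S := hdisc
  have hZ : IsZLattice ℝ S := ⟨hspan⟩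
  have hfree : Module.Free ℤ S := ZLattice.module_free ℝ S
  have hfin : Module.Finite ℤ S := ZLattice.module_finite ℝ S
  have hrank : Module.finrank ℤ S = 2 := by
    rw [ZLattice.rank ℝ S]; exact Complex.finrank_real_complex
  let b : Module.Basis (Fin 2) ℤ S := Module.finBasisOfFinrankEq ℤ S hrank
  let B := b.ofZLatticeBasis ℝ S
  have hB : ![B 0, B 1] = B := by ext i; fin_cases i <;> rfl
  refine ⟨⟨B 0, B 1, by rw [hB]; exact B.linearIndependent⟩, ?_⟩
  have h1 := b.ofZLatticeBasis_span ℝ S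
  have h2 : Set.range B = {B 0, B 1} := by
    rw [← hB, Matrix.range_cons, Matrix.range_cons, Matrix.range_empty]
    simp [Set.pair_comm]
  rw [h2] at h1
  ext x
  change x ∈ Submodule.span ℤ {B 0, B 1} ↔ _
  rw [h1]
  rfl

end Helpers

theorem stmt_2
    (K : Type*) [Field K] [NumberField K]
    (hdeg : Module.finrank ℚ K = 2)
    (hcplx : IsEmpty (K →+* ℝ))
    (τ : K →+* ℂ)
    (Λ : AddSubgroup ℂ)
    (hdisc : DiscreteTopology Λ)
    (hspan : Submodule.span ℝ (Λ : Set ℂ) = ⊤)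
    (hCM : {z : ℂ | ∀ w ∈ Λ, z * w ∈ Λ} =
      Set.range fun a : 𝓞 K => τ (algebraMap (𝓞 K) K a))
    (h2 : IsAlgebraic ℚ (g₂ Λ)) (h3 : IsAlgebraic ℚ (g₃ Λ))
    (𝔞 : FractionalIdeal (nonZeroDivisors (𝓞 K)) K) (h𝔞 : 𝔞 ≠ 0) :
    IsAlgebraic ℚ (g₂ (idealMul τ 𝔞 (Λ : Set ℂ))) ∧
      IsAlgebraic ℚ (g₃ (idealMul τ 𝔞 (Λ : Set ℂ))) := by
  obtain ⟨L, hL⟩ := exists_periodPair Λ hdisc hspan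
  have memL : ∀ x, x ∈ L.lattice ↔ x ∈ Λ := fun x => by rw [← hL]; rfl
  have hG : ∀ r, ∑' w : Λ, ((w : ℂ) ^ r)⁻¹ = L.G r := by
    intro r; subst hL; rfl
  have hL2 : L.g₂ ∈ AA := by
    rw [mem_algebraicClosure_iff]
    rwa [g₂, tsum_nonzero _ _ (by norm_num), hG] at h2
  have hL3 : L.g₃ ∈ AA := by
    rw [mem_algebraicClosure_iff]
    rwa [g₃, tsum_nonzero _ _ (by norm_num), hG] at h3
  set M := idealMul τ 𝔞 (Λ : Set ℂ) with hM
  -- multiplication by integers of K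
  have hmul : ∀ (a : 𝓞 K) (w : ℂ), w ∈ Λ → τ (algebraMap (𝓞 K) K a) * w ∈ Λ := by
    intro a w hw
    have : τ (algebraMap (𝓞 K) K a) ∈ {z : ℂ | ∀ w ∈ Λ, z * w ∈ Λ} := by
      rw [hCM]; exact ⟨a, rfl⟩
    exact this w hw
  obtain ⟨a, ha, ha0⟩ : ∃ a ∈ 𝔞, a ≠ 0 := by
    by_contra! hcon
    exact h𝔞 (FractionalIdeal.eq_zero_iff.2 hcon)
  have hτa : τ a ≠ 0 := (map_ne_zero τ).2 ha0
  obtain ⟨d, hd, hdI⟩ := 𝔞.2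
  have hd0 : algebraMap (𝓞 K) K d ≠ 0 := by
    simpa using nonZeroDivisors.ne_zero hd
  obtain ⟨N, hN0, hNint⟩ := ((IsFractionRing.isAlgebraic_iff ℤ ℚ K).2
    (Algebra.IsAlgebraic.isAlgebraic (R := ℚ)
    ((a * algebraMap (𝓞 K) K d)⁻¹))).exists_integral_multiple
  let y : 𝓞 K := ⟨_, hNint⟩
  have hy : algebraMap (𝓞 K) K y = N • (a * algebraMap (𝓞 K) K d)⁻¹ := rfl
  have hMd : ∀ z ∈ M, τ (algebraMap (𝓞 K) K d) * z ∈ Λ := by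
    intro z hz
    rw [hM, idealMul] at hz
    induction hz using AddSubgroup.closure_induction with
    | mem x hx =>
      obtain ⟨b, hb, s, hs, rfl⟩ := hx
      obtain ⟨c, hc⟩ := hdI b hb
      rw [← mul_assoc, ← map_mul, ← Algebra.smul_def, ← hc]
      exact hmul c s hs
    | zero => simp
    | add x y _ _ hx hy => rw [mul_add]; exact add_mem hx hy
    | neg x _ hx => rw [mul_neg]; exact neg_mem hx
  let M' : AddSubgroup ℂ := M.comap (AddMonoidHom.mulLeft (τ a))
  have hM' : ∀ z, z ∈ M' ↔ τ a * z ∈ M := fun z => Iff.rfl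
  have key : ∀ m : ℕ, ∑' w : M, ((w : ℂ) ^ (2 * m + 4))⁻¹ ∈ AA := by
    intro m
    have h := sum_alg L hL2 hL3 M' ?_ N hN0 ?_ m
    · rw [sum_comap M M' (τ a) hτa hM'] at h
      have hτA : τ a ∈ AA := by
        rw [mem_algebraicClosure_iff]
        have : IsAlgebraic ℚ a := Algebra.IsAlgebraic.isAlgebraic a
        exact this.algHom τ.toRatAlgHom
      have := div_mem h (pow_mem hτA (2 * m + 4))
      rwa [mul_div_cancel_left₀ _ (pow_ne_zero _ hτa)] at this
    · intro x hx
      rw [hM']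
      exact AddSubgroup.subset_closure ⟨a, ha, x, (memL x).1 hx, rfl⟩
    · intro x hx
      rw [memL]
      have h1 := hmul y _ (hMd _ ((hM' x).1 hx))
      have h2 : τ (algebraMap (𝓞 K) K y) * (τ (algebraMap (𝓞 K) K d) * (τ a * x)) = (N : ℂ) * x := by
        rw [hy, zsmul_eq_mul, map_mul, map_inv₀, map_mul, map_intCast]
        have : τ (algebraMap (𝓞 K) K d) ≠ 0 := (map_ne_zero τ).2 hd0
        field_simp
      rwa [h2] at h1
  constructor
  · rw [← mem_algebraicClosure_iff, g₂, tsum_nonzero _ _ (by norm_num)]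
    exact mul_mem (ofNat_mem AA 60) (key 0)
  · rw [← mem_algebraicClosure_iff, g₃, tsum_nonzero _ _ (by norm_num)]
    exact mul_mem (ofNat_mem AA 140) (key 1)
end

section
/- Let Λ and Λ' be lattices in ℂ, both with complex multiplication by R, such that g₂(Λ) and g₃(Λ) are algebraic over ℚ. Let α ∈ ℂ be nonzero with α·Λ ⊆ Λ'. Then α is algebraic over ℚ if and only if g₂(Λ') and g₃(Λ') are both algebraic over ℚ. -/
open NumberField

section
open Filter Topology

lemma ode_unique (a b : ℂ) (q₁ q₂ : ℂ → ℂ) (h₁ : AnalyticAt ℂ q₁ 0) (h₂ : AnalyticAt ℂ q₂ 0)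
    (h₁0 : q₁ 0 = 1/4) (h₂0 : q₂ 0 = 1/4)
    (e₁ : ∀ᶠ z in 𝓝[≠] 0, (z * deriv q₁ z - 2 * q₁ z)^2
      = 4 * (4 * q₁ z ^ 3 - a * q₁ z * z^4 - b * z^6))
    (e₂ : ∀ᶠ z in 𝓝[≠] 0, (z * deriv q₂ z - 2 * q₂ z)^2
      = 4 * (4 * q₂ z ^ 3 - a * q₂ z * z^4 - b * z^6)) :
    ∀ᶠ z in 𝓝 0, q₁ z = q₂ z := by
  by_contra hne
  have hw : AnalyticAt ℂ (fun z => q₁ z - q₂ z) 0 := h₁.sub h₂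
  have hnt : ¬ ∀ᶠ z in 𝓝 0, (fun z => q₁ z - q₂ z) z = 0 := by
    simpa [sub_eq_zero] using hne
  obtain ⟨n, h, hh, hh0, hev⟩ := hw.exists_eventuallyEq_pow_smul_nonzero_iff.mpr hnt
  set A : ℂ → ℂ := fun z => z * (deriv q₁ z + deriv q₂ z) - 2 * (q₁ z + q₂ z) with hA
  set B : ℂ → ℂ := fun z => 4 * (4 * (q₁ z^2 + q₁ z * q₂ z + q₂ z ^2) - a * z^4) + 2 * A z with hB
  have hAc : ContinuousAt A 0 := by
    have := h₁.deriv.continuousAt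
    have := h₂.deriv.continuousAt
    have := h₁.continuousAt
    have := h₂.continuousAt
    fun_prop
  have hBc : ContinuousAt B 0 := by
    have := h₁.continuousAt
    have := h₂.continuousAt
    fun_prop
  have key : ∀ᶠ z in 𝓝[≠] 0, (n * h z + z * deriv h z) * A z - h z * B z = 0 := by
    have d : ∀ᶠ z in 𝓝 0, AnalyticAt ℂ h z := hh.eventually_analyticAt
    have d1 : ∀ᶠ z in 𝓝 0, AnalyticAt ℂ q₁ z := h₁.eventually_analyticAt
    have d2 : ∀ᶠ z in 𝓝 0, AnalyticAt ℂ q₂ z := h₂.eventually_analyticAt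
    filter_upwards [e₁, e₂, nhdsWithin_le_nhds hev.eventually_nhds, nhdsWithin_le_nhds d,
      nhdsWithin_le_nhds d1, nhdsWithin_le_nhds d2, self_mem_nhdsWithin] with z e₁ e₂ hz d d1 d2 hz0
    have hz0 : z ≠ 0 := hz0
    have e0 : q₁ z - q₂ z = z^n * h z := by simpa using hz.self_of_nhds
    have e3 : deriv q₁ z - deriv q₂ z = n * z^(n-1) * h z + z^n * deriv h z := by
      have l : HasDerivAt (fun z => q₁ z - q₂ z) (deriv q₁ z - deriv q₂ z) z :=
        d1.differentiableAt.hasDerivAt.sub d2.differentiableAt.hasDerivAt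
      have r : HasDerivAt (fun z => (z-0)^n • h z) (n * z^(n-1) * h z + z^n * deriv h z) z := by
        simpa using (hasDerivAt_pow n z).fun_mul d.differentiableAt.hasDerivAt
      exact l.unique (r.congr_of_eventuallyEq hz)
    have e4 : z * (deriv q₁ z - deriv q₂ z) = z^n * (n * h z + z * deriv h z) := by
      rw [e3]
      rcases n with _ | n
      · simp
      · simp; ring
    have : z^n * ((n * h z + z * deriv h z) * A z - h z * B z) = 0 := by
      have : z^n * ((n * h z + z * deriv h z) * A z - h z * B z) =
        (z^n * (n * h z + z * deriv h z)) * A z - (z^n * h z) * B z := by ring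
      rw [this, ← e4, ← e0]
      simp only [hB, hA]
      linear_combination e₁ - e₂
    exact (mul_eq_zero.mp this).resolve_left (pow_ne_zero _ hz0)
  have hc : ContinuousAt (fun z => (n * h z + z * deriv h z) * A z - h z * B z) 0 := by
    have := hh.deriv.continuousAt
    have := hh.continuousAt
    fun_prop
  have h0 := tendsto_nhds_unique (hc.tendsto.mono_left (nhdsWithin_le_nhds (s := {0}ᶜ)))
    (tendsto_const_nhds.congr' (key.mono fun z hz => hz.symm))
  simp only [hA, hB, h₁0, h₂0] at h0
  have : h 0 * ((n:ℂ) + 1) = 0 := by linear_combination -h0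
  rcases mul_eq_zero.mp this with h | h
  · exact hh0 h
  · exact Nat.cast_add_one_ne_zero n h

lemma ode_unique' (a b : ℂ) (q₁ q₂ Y₁ Y₂ : ℂ → ℂ) (h₁ : AnalyticAt ℂ q₁ 0) (h₂ : AnalyticAt ℂ q₂ 0)
    (h₁0 : q₁ 0 = 1/4) (h₂0 : q₂ 0 = 1/4)
    (f₁ : ∀ᶠ z in 𝓝[≠] 0, q₁ z = z^2 * Y₁ z) (f₂ : ∀ᶠ z in 𝓝[≠] 0, q₂ z = z^2 * Y₂ z)
    (e₁ : ∀ᶠ z in 𝓝[≠] 0, ∃ d, HasDerivAt Y₁ d z ∧ d^2 = 4 * (4 * Y₁ z ^ 3 - a * Y₁ z - b))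
    (e₂ : ∀ᶠ z in 𝓝[≠] 0, ∃ d, HasDerivAt Y₂ d z ∧ d^2 = 4 * (4 * Y₂ z ^ 3 - a * Y₂ z - b)) :
    ∀ᶠ z in 𝓝[≠] 0, Y₁ z = Y₂ z := by
  have aux : ∀ (q Y : ℂ → ℂ), (∀ᶠ z in 𝓝[≠] 0, q z = z^2 * Y z) →
      (∀ᶠ z in 𝓝[≠] 0, ∃ d, HasDerivAt Y d z ∧ d^2 = 4 * (4 * Y z ^ 3 - a * Y z - b)) →
      ∀ᶠ z in 𝓝[≠] 0, (z * deriv q z - 2 * q z)^2 = 4 * (4 * q z ^ 3 - a * q z * z^4 - b * z^6) := by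
    intro q Y f e
    have f' := eventually_eventually_nhdsWithin.mpr f
    filter_upwards [f, f', e, self_mem_nhdsWithin] with z f f' ⟨d, hd, e⟩ hz
    have hz0 : z ≠ 0 := hz
    rw [nhdsWithin_eq_nhds.mpr (isOpen_compl_singleton.mem_nhds hz0)] at f'
    have hq : HasDerivAt q (2 * z * Y z + z^2 * d) z := by
      have : HasDerivAt (fun z => z^2 * Y z) (2 * z * Y z + z^2 * d) z := by
        simpa using (hasDerivAt_pow 2 z).fun_mul hd
      exact this.congr_of_eventuallyEq f'
    rw [hq.deriv, f]
    linear_combination z^6 * e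
  have := ode_unique a b q₁ q₂ h₁ h₂ h₁0 h₂0 (aux _ _ f₁ e₁) (aux _ _ f₂ e₂)
  filter_upwards [nhdsWithin_le_nhds this, f₁, f₂, self_mem_nhdsWithin] with z h f₁ f₂ hz
  have hz0 : z ≠ 0 := hz
  rw [f₁, f₂] at h
  exact mul_left_cancel₀ (pow_ne_zero 2 hz0) h

noncomputable def pfun (L : PeriodPair) (z : ℂ) : ℂ := z^2 * L.weierstrassPExcept 0 z + 1

lemma pfun_an (L : PeriodPair) : AnalyticAt ℂ (pfun L) 0 := by
  unfold pfun
  have := L.analyticAt_weierstrassPExcept 0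
  fun_prop

lemma pfun_zero (L : PeriodPair) : pfun L 0 = 1 := by simp [pfun]

lemma pfun_eq (L : PeriodPair) (z : ℂ) (hz : z ≠ 0) : pfun L z = z^2 * L.weierstrassP z := by
  have := L.ite_eq_one_sub_sq_mul_weierstrassP 0 (zero_mem _) z
  rw [if_neg hz] at this
  simp at this
  rw [pfun, this]

lemma ev_notMem (L : PeriodPair) : ∀ᶠ z in 𝓝[≠] 0, z ∉ L.lattice := by
  filter_upwards [nhdsWithin_le_nhds (L.compl_lattice_sdiff_singleton_mem_nhds 0),
    self_mem_nhdsWithin] with z hz h0 hm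
  exact hz ⟨hm, h0⟩

lemma P_hasDeriv (L : PeriodPair) {z : ℂ} (hz : z ∉ L.lattice) :
    HasDerivAt L.weierstrassP (L.derivWeierstrassP z) z := by
  rw [← L.deriv_weierstrassP]
  exact ((L.analyticOnNhd_weierstrassP z hz).differentiableAt).hasDerivAt

lemma tendsto_two : Tendsto (fun z : ℂ => 2 * z) (𝓝[≠] 0) (𝓝[≠] 0) := by
  refine tendsto_nhdsWithin_of_tendsto_nhds_of_eventually_within _ ?_ ?_
  · refine Tendsto.mono_left ?_ nhdsWithin_le_nhds
    have : ContinuousAt (fun z : ℂ => 2 * z) 0 := by fun_prop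
    simpa [ContinuousAt] using this
  · filter_upwards [self_mem_nhdsWithin] with z hz
    simpa using hz

lemma Y1_props (L : PeriodPair) : AnalyticAt ℂ (fun z => pfun L (2*z) / 4) 0 ∧
    (pfun L (2*0) / 4 = 1/4) ∧
    (∀ᶠ z in 𝓝[≠] 0, pfun L (2*z) / 4 = z^2 * L.weierstrassP (2*z)) ∧
    (∀ᶠ z in 𝓝[≠] 0, ∃ d, HasDerivAt (fun z => L.weierstrassP (2*z)) d z ∧
      d^2 = 4 * (4 * L.weierstrassP (2*z) ^ 3 - L.g₂ * L.weierstrassP (2*z) - L.g₃)) := by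
  refine ⟨?_, by simp [pfun_zero], ?_, ?_⟩
  · have : AnalyticAt ℂ (fun z => pfun L (2*z)) 0 :=
      AnalyticAt.fun_comp (by simpa using pfun_an L) (by fun_prop)
    fun_prop
  · filter_upwards [self_mem_nhdsWithin] with z hz
    rw [pfun_eq L (2*z) (by simpa using hz)]
    ring
  · filter_upwards [tendsto_two.eventually (ev_notMem L)] with z hz
    refine ⟨2 * L.derivWeierstrassP (2*z), ?_, ?_⟩
    · have := (P_hasDeriv L hz).comp z ((hasDerivAt_id z).const_mul 2)
      simpa [mul_comm, Function.comp_def] using this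
    · rw [mul_pow, L.derivWeierstrassP_sq _ hz]; ring

noncomputable def Nf (L : PeriodPair) (x : ℂ) : ℂ := 4 * x^3 - L.g₂ * x - L.g₃
noncomputable def Mf (L : PeriodPair) (x : ℂ) : ℂ := (x^2 + L.g₂/4)^2 + 2 * L.g₃ * x

lemma Nf_ne (L : PeriodPair) : ∀ᶠ z in 𝓝[≠] 0, Nf L (L.weierstrassP z) ≠ 0 := by
  have hc : ContinuousAt (fun z => 4 * pfun L z^3 - L.g₂ * pfun L z * z^4 - L.g₃ * z^6) 0 := by
    have := (pfun_an L).continuousAt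
    fun_prop
  have := hc.eventually_ne (y := 0) (by simp [pfun_zero])
  filter_upwards [nhdsWithin_le_nhds this, self_mem_nhdsWithin] with z hz h0 h
  apply hz
  rw [pfun_eq L z h0]
  rw [Nf] at h
  linear_combination z^6 * h

lemma Y2_props (L : PeriodPair) : ∃ q : ℂ → ℂ, AnalyticAt ℂ q 0 ∧ q 0 = 1/4 ∧
    (∀ᶠ z in 𝓝[≠] 0, q z = z^2 * (Mf L (L.weierstrassP z) / Nf L (L.weierstrassP z))) ∧
    (∀ᶠ z in 𝓝[≠] 0, ∃ d,
      HasDerivAt (fun z => Mf L (L.weierstrassP z) / Nf L (L.weierstrassP z)) d z ∧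
      d^2 = 4 * (4 * (Mf L (L.weierstrassP z) / Nf L (L.weierstrassP z)) ^ 3
        - L.g₂ * (Mf L (L.weierstrassP z) / Nf L (L.weierstrassP z)) - L.g₃)) := by
  have hp := pfun_an L
  refine ⟨fun z => ((pfun L z ^2 + L.g₂/4 * z^4)^2 + 2 * L.g₃ * pfun L z * z^6) /
    (4 * pfun L z^3 - L.g₂ * pfun L z * z^4 - L.g₃ * z^6), ?_, ?_, ?_, ?_⟩
  · refine AnalyticAt.fun_div (by fun_prop) (by fun_prop) (by simp [pfun_zero])
  · simp [pfun_zero]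
  · filter_upwards [Nf_ne L, self_mem_nhdsWithin] with z hz h0
    have h0 : z ≠ 0 := h0
    rw [pfun_eq L z h0]
    have : (4 * (z^2 * L.weierstrassP z)^3 - L.g₂ * (z^2 * L.weierstrassP z) * z^4 - L.g₃ * z^6)
      = z^6 * Nf L (L.weierstrassP z) := by rw [Nf]; ring
    rw [this]
    have : ((z^2 * L.weierstrassP z) ^2 + L.g₂/4 * z^4)^2 + 2 * L.g₃ * (z^2 * L.weierstrassP z) * z^6
      = z^8 * Mf L (L.weierstrassP z) := by rw [Mf]; ring
    rw [this]
    field_simp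
  · filter_upwards [Nf_ne L, ev_notMem L] with z hz hm
    set x := L.weierstrassP z with hx
    have hd := P_hasDeriv L hm
    set y := L.derivWeierstrassP z with hy
    have hM : HasDerivAt (fun z => Mf L (L.weierstrassP z)) ((4 * x * (x^2 + L.g₂/4) + 2 * L.g₃) * y) z := by
      unfold Mf
      refine ((((hd.fun_pow 2).add_const (L.g₂/4)).fun_pow 2).fun_add (hd.const_mul (2 * L.g₃))).congr_deriv ?_
      simp; ring
    have hN : HasDerivAt (fun z => Nf L (L.weierstrassP z)) ((12 * x^2 - L.g₂) * y) z := by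
      unfold Nf
      refine ((((hd.fun_pow 3).const_mul 4).fun_sub (hd.const_mul (L.g₂))).sub_const L.g₃).congr_deriv ?_
      simp; ring
    refine ⟨_, hM.fun_div hN hz, ?_⟩
    have hy2 : y^2 = Nf L x := L.derivWeierstrassP_sq z hm
    have e : ((4 * x * (x^2 + L.g₂/4) + 2 * L.g₃) * y * Nf L x - Mf L x * ((12 * x^2 - L.g₂) * y))
      = y * ((4 * x * (x^2 + L.g₂/4) + 2 * L.g₃) * Nf L x - Mf L x * (12 * x^2 - L.g₂)) := by ring
    rw [← hx, e, div_pow, mul_pow, hy2]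
    field_simp
    rw [Mf, Nf]
    ring

lemma L_countable (L : PeriodPair) : (L.lattice : Set ℂ).Countable :=
  Set.countable_coe_iff.mp (inferInstanceAs (Countable L.lattice))

lemma precon (L : PeriodPair) : IsPreconnected ((L.lattice : Set ℂ)ᶜ) :=
  (Set.Countable.isConnected_compl_of_one_lt_rank (by simp) (L_countable L)).2

/-- Identity theorem on the complement of the lattice, from a punctured nbhd of zero. -/
lemma ident (L : PeriodPair) {f : ℂ → ℂ} (hf : AnalyticOnNhd ℂ f (L.lattice : Set ℂ)ᶜ)
    (h : ∀ᶠ z in 𝓝[≠] 0, f z = 0) {z : ℂ} (hz : z ∉ L.lattice) : f z = 0 := by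
  obtain ⟨w, hw, hw1, hw2⟩ := ((eventually_eventually_nhdsWithin.mpr h).and
    ((ev_notMem L).and self_mem_nhdsWithin)).exists
  have hw2 : w ≠ 0 := hw2
  rw [nhdsWithin_eq_nhds.mpr (isOpen_compl_singleton.mem_nhds hw2)] at hw
  exact hf.eqOn_zero_of_preconnected_of_eventuallyEq_zero (precon L) hw1 hw hz

/-- duplication formula -/
lemma dup (L : PeriodPair) {z : ℂ} (hz : 2 * z ∉ L.lattice) :
    L.weierstrassP (2*z) * Nf L (L.weierstrassP z) = Mf L (L.weierstrassP z) := by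
  obtain ⟨a1, a2, a3, a4⟩ := Y1_props L
  obtain ⟨q, b1, b2, b3, b4⟩ := Y2_props L
  have key := ode_unique' L.g₂ L.g₃ _ q _ _ a1 b1 a2 b2 a3 b3 a4 b4
  -- use variable `u = 2 z`
  have tend : Tendsto (fun z : ℂ => z / 2) (𝓝[≠] 0) (𝓝[≠] 0) := by
    refine tendsto_nhdsWithin_of_tendsto_nhds_of_eventually_within _ ?_ ?_
    · refine Tendsto.mono_left ?_ nhdsWithin_le_nhds
      have : ContinuousAt (fun z : ℂ => z / 2) 0 := by fun_prop
      simpa [ContinuousAt] using this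
    · filter_upwards [self_mem_nhdsWithin] with z hz
      simpa using hz
  have hP := L.analyticOnNhd_weierstrassP
  have main := ident L (f := fun u => L.weierstrassP u * Nf L (L.weierstrassP (u/2))
      - Mf L (L.weierstrassP (u/2))) ?_ ?_ hz
  · simp only [mul_div_cancel_left₀ z (two_ne_zero' ℂ)] at main
    exact sub_eq_zero.mp main
  · intro u hu
    have h1 := hP u hu
    have h2 : AnalyticAt ℂ (fun u => L.weierstrassP (u/2)) u := by
      refine AnalyticAt.fun_comp (hP _ ?_) (by fun_prop)
      intro hm
      apply hu
      have := L.lattice.add_mem hm hm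
      simpa using this
    unfold Nf Mf
    fun_prop
  · filter_upwards [tend.eventually key, tend.eventually (Nf_ne L)] with u hu hn
    simp only [mul_div_cancel₀ u (two_ne_zero' ℂ)] at hu
    rw [hu, div_mul_cancel₀ _ hn, sub_self]

lemma half (L : PeriodPair) {z : ℂ} (hz : z ∉ L.lattice) (h2 : 2 * z ∈ L.lattice) :
    Nf L (L.weierstrassP z) = 0 := by
  have h := L.derivWeierstrassP_sub_coe z ⟨_, h2⟩
  have e : z - 2 * z = - z := by ring
  simp only [e, L.derivWeierstrassP_neg] at h
  have : L.derivWeierstrassP z = 0 := by linear_combination (-1/2) * h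
  have h3 := L.derivWeierstrassP_sq z hz
  rw [this] at h3
  rw [Nf, ← h3]; simp

lemma g_ne (L : PeriodPair) : ¬ (L.g₂ = 0 ∧ L.g₃ = 0) := by
  rintro ⟨h2, h3⟩
  obtain ⟨a1, a2, a3, a4⟩ := Y1_props L
  have key := ode_unique' L.g₂ L.g₃ _ (fun _ => 1/4) _ (fun z => 1/(4*z^2)) a1 (by fun_prop) a2 rfl a3 ?_ a4 ?_
  · have main := ident L (f := fun u => u^2 * L.weierstrassP u - 1) ?_ ?_ L.ω₁_div_two_notMem_lattice
    · have := half L L.ω₁_div_two_notMem_lattice (by simpa [mul_div_cancel₀] using L.ω₁_mem_lattice)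
      rw [Nf, h2, h3] at this
      simp at this
      simp [this] at main
    · have hP := L.analyticOnNhd_weierstrassP
      intro u hu
      have := hP u hu
      fun_prop
    · have tend : Tendsto (fun z : ℂ => z / 2) (𝓝[≠] 0) (𝓝[≠] 0) := by
        refine tendsto_nhdsWithin_of_tendsto_nhds_of_eventually_within _ ?_ ?_
        · refine Tendsto.mono_left ?_ nhdsWithin_le_nhds
          have : ContinuousAt (fun z : ℂ => z / 2) 0 := by fun_prop
          simpa [ContinuousAt] using this
        · filter_upwards [self_mem_nhdsWithin] with z hz
          simpa using hz
      filter_upwards [tend.eventually key, self_mem_nhdsWithin] with u hu h0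
      have h0 : u ≠ 0 := h0
      simp only [mul_div_cancel₀ u (two_ne_zero' ℂ)] at hu
      rw [hu]
      field_simp
      ring
  · filter_upwards [self_mem_nhdsWithin] with u h0
    have h0 : u ≠ 0 := h0
    field_simp
  · filter_upwards [self_mem_nhdsWithin] with u h0
    have h0 : u ≠ 0 := h0
    refine ⟨-(4 * (2 * u)) / (4 * u^2)^2, ?_, ?_⟩
    · have := ((hasDerivAt_pow 2 u).const_mul 4).fun_inv (by simpa using h0)
      simpa using this
    · rw [h2, h3]; field_simp; ring

lemma deriv2 (L : PeriodPair) {z : ℂ} (hz : z ∉ L.lattice) :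
    deriv L.derivWeierstrassP z = 6 * L.weierstrassP z ^ 2 - L.g₂ / 2 := by
  have hP := L.analyticOnNhd_weierstrassP
  have hD := L.analyticOnNhd_derivWeierstrassP
  have main := ident L (f := fun z => deriv L.derivWeierstrassP z -
    (6 * L.weierstrassP z ^ 2 - L.g₂ / 2)) ?_ ?_ hz
  · exact sub_eq_zero.mp main
  · intro u hu
    have h1 := hP u hu
    have h2 := (hD u hu).deriv
    fun_prop
  · filter_upwards [Nf_ne L, ev_notMem L] with u h1 h2
    have hopen : ∀ᶠ w in 𝓝 u, w ∉ L.lattice := L.isClosed_lattice.isOpen_compl.mem_nhds h2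
    have hd := P_hasDeriv L h2
    have hdd : HasDerivAt L.derivWeierstrassP (deriv L.derivWeierstrassP u) u :=
      (hD u h2).differentiableAt.hasDerivAt
    have hl := hdd.fun_pow 2
    have hr := (((hd.fun_pow 3).const_mul 4).fun_sub (hd.const_mul (L.g₂))).sub_const L.g₃
    have heq : (fun z => L.derivWeierstrassP z ^ 2) =ᶠ[𝓝 u]
        fun z => 4 * L.weierstrassP z ^ 3 - L.g₂ * L.weierstrassP z - L.g₃ :=
      hopen.mono fun w hw => L.derivWeierstrassP_sq w hw
    have e := hl.unique (hr.congr_of_eventuallyEq heq)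
    have hne : L.derivWeierstrassP u ≠ 0 := by
      intro h
      have := L.derivWeierstrassP_sq u h2
      rw [h] at this
      apply h1
      rw [Nf, ← this]; simp
    apply mul_left_cancel₀ hne
    simp at e
    linear_combination e / 2

lemma S4 (L : PeriodPair) {z : ℂ} (hz : z ∉ L.lattice) :
    6 * L.sumInvPow z 4 = 6 * L.weierstrassP z ^ 2 - L.g₂ / 2 := by
  have h := L.iteratedDeriv_weierstrassPExcept_self z (n := 2)
  rw [L.weierstrassPExcept_of_notMem z hz, iteratedDeriv_succ, iteratedDeriv_one,
    L.deriv_weierstrassP, deriv2 L hz] at h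
  rw [h]
  norm_num [Nat.factorial]

lemma S6 (L : PeriodPair) {z : ℂ} (hz : z ∉ L.lattice) :
    120 * L.sumInvPow z 6 = 12 * Nf L (L.weierstrassP z) +
      12 * L.weierstrassP z * (6 * L.weierstrassP z ^ 2 - L.g₂ / 2) := by
  have h := L.iteratedDeriv_weierstrassPExcept_self z (n := 4)
  have nh : ∀ {u : ℂ}, u ∉ L.lattice → ∀ᶠ w in 𝓝 u, w ∉ L.lattice :=
    fun hu => L.isClosed_lattice.isOpen_compl.mem_nhds hu
  have d3 : ∀ {u : ℂ}, u ∉ L.lattice → deriv (deriv L.derivWeierstrassP) u =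
      12 * L.weierstrassP u * L.derivWeierstrassP u := by
    intro u hu
    have hd := P_hasDeriv L hu
    have e : deriv L.derivWeierstrassP =ᶠ[𝓝 u] fun z => 6 * L.weierstrassP z ^ 2 - L.g₂ / 2 :=
      (nh hu).mono fun w hw => deriv2 L hw
    rw [e.deriv_eq, (((hd.fun_pow 2).const_mul 6).sub_const _).deriv]
    simp; ring
  have d4 : deriv (deriv (deriv L.derivWeierstrassP)) z = 12 * Nf L (L.weierstrassP z) +
      12 * L.weierstrassP z * (6 * L.weierstrassP z ^ 2 - L.g₂ / 2) := by
    have hd := P_hasDeriv L hz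
    have hdd : HasDerivAt L.derivWeierstrassP (deriv L.derivWeierstrassP z) z :=
      (L.analyticOnNhd_derivWeierstrassP z hz).differentiableAt.hasDerivAt
    have e : deriv (deriv L.derivWeierstrassP) =ᶠ[𝓝 z]
        fun z => 12 * L.weierstrassP z * L.derivWeierstrassP z :=
      (nh hz).mono fun w hw => d3 hw
    rw [e.deriv_eq, ((hd.const_mul 12).fun_mul hdd).deriv, deriv2 L hz, Nf,
      ← L.derivWeierstrassP_sq z hz]
    ring
  rw [L.weierstrassPExcept_of_notMem z hz, iteratedDeriv_succ, iteratedDeriv_succ,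
    iteratedDeriv_succ, iteratedDeriv_one, L.deriv_weierstrassP, d4] at h
  rw [h]
  norm_num [Nat.factorial]

noncomputable abbrev QA : IntermediateField ℚ ℂ := algebraicClosure ℚ ℂ

lemma mem_QA {x : ℂ} : x ∈ QA ↔ IsAlgebraic ℚ x := mem_algebraicClosure_iff

open Polynomial in
lemma mem_QA_of_root {x : ℂ} (p : QA[X]) (hp : p ≠ 0) (h : aeval x p = 0) : x ∈ QA := by
  have : IsAlgebraic QA x := ⟨p, hp, h⟩
  have : Algebra.IsAlgebraic ℚ QA := algebraicClosure.isAlgebraic ℚ ℂ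
  exact mem_QA.mpr (IsAlgebraic.restrictScalars ℚ ‹IsAlgebraic QA x›)

open Polynomial in
lemma polys (L : PeriodPair) (h2 : L.g₂ ∈ QA) (h3 : L.g₃ ∈ QA) (n : ℕ) :
    ∃ (P Q : QA[X]) (d : ℕ), P.natDegree ≤ d + 1 ∧ P.coeff (d+1) = 1 ∧ Q.natDegree ≤ d ∧
      Q.coeff d = 4^n ∧ ∀ z : ℂ, (∀ i ≤ n, 2^i * z ∉ L.lattice) →
        L.weierstrassP (2^n * z) * aeval (L.weierstrassP z) Q = aeval (L.weierstrassP z) P := by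
  induction n with
  | zero => exact ⟨X, 1, 0, by simp, by simp, by simp, by simp, by simp⟩
  | succ n ih =>
    obtain ⟨P, Q, d, p1, p2, q1, q2, h⟩ := ih
    let a : QA := ⟨_, h2⟩
    let b : QA := ⟨_, h3⟩
    have hPQ : ∀ (i j : ℕ), (P^i * Q^j).natDegree ≤ i*(d+1) + j*d := fun i j =>
      natDegree_mul_le_of_le (natDegree_pow_le_of_le i p1) (natDegree_pow_le_of_le j q1)
    have cPQ : ∀ (i j : ℕ), (P^i * Q^j).coeff (i*(d+1) + j*d) = (4^n)^j := fun i j => by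
      rw [coeff_mul_add_eq_of_natDegree_le (natDegree_pow_le_of_le i p1) (natDegree_pow_le_of_le j q1),
        coeff_pow_of_natDegree_le p1, coeff_pow_of_natDegree_le q1, p2, q2]
      simp
    have c0 : ∀ (i j m : ℕ), i*(d+1) + j*d < m → (P^i * Q^j).coeff m = 0 := fun i j m hm =>
      coeff_eq_zero_of_natDegree_lt ((hPQ i j).trans_lt hm)
    refine ⟨P^4*Q^0 + C (a/2) * (P^2*Q^2) + C (a^2/16) * (P^0*Q^4) + C (2*b) * (P^1*Q^3),
      C 4 * (P^3*Q^1) - C a * (P^1*Q^3) - C b * (P^0*Q^4), 4*d+3, ?_, ?_, ?_, ?_, ?_⟩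
    · rw [natDegree_le_iff_coeff_eq_zero]
      intro m hm
      simp only [coeff_add, coeff_C_mul]
      rw [c0 4 0 m (by omega), c0 2 2 m (by omega), c0 0 4 m (by omega), c0 1 3 m (by omega)]
      simp
    · simp only [coeff_add, coeff_C_mul]
      have := cPQ 4 0
      rw [show 4*(d+1)+0*d = 4*d+3+1 by ring] at this
      rw [this, c0 2 2 _ (by omega), c0 0 4 _ (by omega), c0 1 3 _ (by omega)]
      simp
    · rw [natDegree_le_iff_coeff_eq_zero]
      intro m hm
      simp only [coeff_sub, coeff_C_mul]
      rw [c0 3 1 m (by omega), c0 0 4 m (by omega), c0 1 3 m (by omega)]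
      simp
    · simp only [coeff_sub, coeff_C_mul]
      have := cPQ 3 1
      rw [show 3*(d+1)+1*d = 4*d+3 by ring] at this
      rw [this, c0 0 4 _ (by omega), c0 1 3 _ (by omega)]
      simp; ring
    · intro z hz
      have e := h z fun i hi => hz i (by omega)
      have e2 : (2:ℂ)^(n+1) * z = 2 * (2^n*z) := by ring
      have dd := dup L (z := 2^n*z) (by rw [← e2]; exact hz _ le_rfl)
      have ha : algebraMap QA ℂ a = L.g₂ := rfl
      have hb : algebraMap QA ℂ b = L.g₃ := rfl
      rw [e2]
      simp only [map_add, map_sub, map_mul, map_pow, aeval_C, map_div₀, ha, hb, ← e, map_ofNat]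
      rw [Nf, Mf] at dd
      linear_combination (aeval (L.weierstrassP z) Q)^4 * dd

open Polynomial in
lemma down (L : PeriodPair) (h2 : L.g₂ ∈ QA) (h3 : L.g₃ ∈ QA) (n : ℕ) (z : ℂ)
    (hz : ∀ i ≤ n, 2^i * z ∉ L.lattice) (hy : L.weierstrassP (2^n * z) ∈ QA) :
    L.weierstrassP z ∈ QA := by
  obtain ⟨P, Q, d, p1, p2, q1, q2, h⟩ := polys L h2 h3 n
  refine mem_QA_of_root (P - C ⟨_, hy⟩ * Q) ?_ ?_
  · intro h0
    have := congr_arg (fun p => coeff p (d+1)) h0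
    simp [p2, coeff_eq_zero_of_natDegree_lt (Nat.lt_succ_of_le q1)] at this
  · have e : algebraMap QA ℂ ⟨_, hy⟩ = L.weierstrassP (2^n * z) := rfl
    rw [map_sub, map_mul, aeval_C, ← h z hz, e, sub_self]

open Polynomial in
lemma periodic_alg (L : PeriodPair) (h2 : L.g₂ ∈ QA) (h3 : L.g₃ ∈ QA) (n : ℕ) (hn : n ≠ 0) (z : ℂ)
    (hz : ∀ i ≤ n, 2^i * z ∉ L.lattice) (hy : 2^n * z - z ∈ L.lattice) :
    L.weierstrassP z ∈ QA := by
  obtain ⟨P, Q, d, p1, p2, q1, q2, h⟩ := polys L h2 h3 n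
  refine mem_QA_of_root (P - X * Q) ?_ ?_
  · intro h0
    have := congr_arg (fun p => coeff p (d+1)) h0
    simp only [coeff_sub, p2, coeff_X_mul, q2, coeff_zero] at this
    have h4 : (4:QA)^n = ((4^n : ℕ) : QA) := by push_cast; rfl
    rw [h4, sub_eq_zero, eq_comm, Nat.cast_eq_one] at this
    have := Nat.one_lt_pow hn (show 1 < 4 by norm_num)
    omega
  · have e : L.weierstrassP (2^n * z) = L.weierstrassP z := by
      have := L.weierstrassP_add_coe z ⟨_, hy⟩
      simpa using this
    rw [map_sub, map_mul, aeval_X, ← h z hz, e, sub_self]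

open Polynomial in
lemma torsion_alg (L : PeriodPair) (h2 : L.g₂ ∈ QA) (h3 : L.g₃ ∈ QA) (N : ℕ) (hN : N ≠ 0) (z : ℂ)
    (hz : z ∉ L.lattice) (hNz : N * z ∈ L.lattice) : L.weierstrassP z ∈ QA := by
  classical
  by_cases hall : ∀ i : ℕ, 2^i * z ∉ L.lattice
  · have : NeZero N := ⟨hN⟩
    obtain ⟨i, j, hij, e⟩ := Finite.exists_ne_map_eq_of_infinite (fun i : ℕ => ((2^i : ℕ) : ZMod N))
    wlog hlt : i < j generalizing i j
    · exact this j i hij.symm e.symm (by omega)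
    have e : ((2^i : ℕ) : ZMod N) = ((2^j : ℕ) : ZMod N) := e
    rw [ZMod.natCast_eq_natCast_iff] at e
    obtain ⟨k, hk⟩ := e.dvd
    have hk' : (2:ℂ)^j - 2^i = N * k := by exact_mod_cast congr_arg (Int.cast : ℤ → ℂ) hk
    refine down L h2 h3 i z (fun i _ => hall i) (periodic_alg L h2 h3 (j-i) (by omega) _ ?_ ?_)
    · intro m _
      rw [← mul_assoc, ← pow_add]; exact hall _
    · rw [← mul_assoc, ← pow_add, Nat.sub_add_cancel hlt.le, ← sub_mul, hk']
      have := L.lattice.smul_mem k hNz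
      rw [zsmul_eq_mul] at this
      convert this using 1; ring
  · push Not at hall
    have hmin := fun m => Nat.find_min (m := m) hall
    have hs := Nat.find_spec hall
    obtain ⟨k, hk⟩ : ∃ k, Nat.find hall = k + 1 := by
      refine Nat.exists_eq_succ_of_ne_zero fun h0 => ?_
      rw [h0] at hs; simp at hs; exact hz hs
    rw [hk] at hmin hs
    refine down L h2 h3 k z (fun i hi => hmin i (by omega)) ?_
    have hh := half L (hmin k (by omega)) (by rw [← mul_assoc, ← pow_succ']; exact hs)
    refine mem_QA_of_root (C 4 * X^3 - C ⟨_, h2⟩ * X - C ⟨_, h3⟩) ?_ ?_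
    · intro h0
      have := congr_arg (fun p => coeff p 3) h0
      simp at this
    · rw [Nf] at hh
      simp only [map_sub, map_mul, map_pow, aeval_X, aeval_C, map_ofNat]
      exact hh

lemma sum_alg_s3 (L : PeriodPair) (h2 : L.g₂ ∈ QA) (h3 : L.g₃ ∈ QA) (N : ℕ) (hN : N ≠ 0) (z : ℂ)
    (hNz : N * z ∈ L.lattice) : L.sumInvPow z 4 ∈ QA ∧ L.sumInvPow z 6 ∈ QA := by
  have n : ∀ m : ℕ, [m.AtLeastTwo] → (OfNat.ofNat m : ℂ) ∈ QA := fun m _ => ofNat_mem QA m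
  by_cases hz : z ∈ L.lattice
  · have e : ∀ r, L.sumInvPow z r = L.G r := by
      intro r
      rw [PeriodPair.sumInvPow, PeriodPair.G, ← (Equiv.addRight (⟨z, hz⟩ : L.lattice)).tsum_eq]
      simp
    rw [e, e]
    constructor
    · have : L.G 4 = L.g₂ / 60 := by rw [PeriodPair.g₂]; ring
      rw [this]; exact div_mem h2 (n 60)
    · have : L.G 6 = L.g₃ / 140 := by rw [PeriodPair.g₃]; ring
      rw [this]; exact div_mem h3 (n 140)
  · have hx := torsion_alg L h2 h3 N hN z hz hNz
    have hy : 6 * L.weierstrassP z ^ 2 - L.g₂ / 2 ∈ QA :=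
      sub_mem (mul_mem (n 6) (pow_mem hx 2)) (div_mem h2 (n 2))
    constructor
    · have : L.sumInvPow z 4 = (6 * L.weierstrassP z ^ 2 - L.g₂ / 2) / 6 := by
        rw [← S4 L hz]; ring
      rw [this]
      exact div_mem hy (n 6)
    · have : L.sumInvPow z 6 = (12 * Nf L (L.weierstrassP z) +
          12 * L.weierstrassP z * (6 * L.weierstrassP z ^ 2 - L.g₂ / 2)) / 120 := by
        rw [← S6 L hz]; ring
      rw [this]
      refine div_mem (add_mem (mul_mem (n 12) ?_) (mul_mem (mul_mem (n 12) hx) hy)) (n 120)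
      exact sub_mem (sub_mem (mul_mem (n 4) (pow_mem hx 3)) (mul_mem h2 hx)) h3

abbrev subM (M L : PeriodPair) : Submodule ℤ L.lattice := M.lattice.submoduleOf L.lattice

lemma fin_quot (M L : PeriodPair) (h : M.lattice ≤ L.lattice) :
    Finite (L.lattice ⧸ subM M L) := by
  have : Module.Free ℤ L.lattice := Module.Free.of_basis L.latticeBasis
  have : Module.Finite ℤ L.lattice := Module.Finite.of_basis L.latticeBasis
  refine Submodule.finiteQuotientOfFreeOfRankEq _ ?_
  rw [(Submodule.submoduleOfEquivOfLe h).finrank_eq, M.finrank_lattice, L.finrank_lattice]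

lemma exists_N (M L : PeriodPair) (h : M.lattice ≤ L.lattice) :
    ∃ N : ℕ, N ≠ 0 ∧ ∀ z ∈ L.lattice, N * z ∈ M.lattice := by
  have := fin_quot M L h
  refine ⟨Nat.card (L.lattice ⧸ subM M L), Nat.card_pos.ne', fun z hz => ?_⟩
  have h0 : Nat.card (L.lattice ⧸ subM M L) • (Submodule.Quotient.mk ⟨z, hz⟩ : L.lattice ⧸ subM M L) = 0 :=
    card_nsmul_eq_zero'
  rw [← Submodule.Quotient.mk_smul, Submodule.Quotient.mk_eq_zero] at h0
  have h1 : ((Nat.card (L.lattice ⧸ subM M L) • (⟨z, hz⟩ : L.lattice) : L.lattice) : ℂ) ∈ M.lattice := h0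
  simpa using h1

noncomputable def cosetEquiv (M L : PeriodPair) (h : M.lattice ≤ L.lattice) :
    (L.lattice ⧸ subM M L) × M.lattice ≃ L.lattice :=
  Equiv.ofBijective (fun x => ⟨x.2, h x.2.2⟩ - Quotient.out x.1) <| by
    have ho : ∀ q : L.lattice ⧸ subM M L, Submodule.Quotient.mk (Quotient.out q) = q :=
      fun q => Quotient.out_eq q
    have hm : ∀ m : M.lattice, (Submodule.Quotient.mk ⟨m, h m.2⟩ : L.lattice ⧸ subM M L) = 0 :=
      fun m => by rw [Submodule.Quotient.mk_eq_zero]; exact m.2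
    constructor
    · rintro ⟨q, m⟩ ⟨q', m'⟩ e
      have e1 := congr_arg (Submodule.Quotient.mk : _ → L.lattice ⧸ subM M L) e
      simp only [Submodule.Quotient.mk_sub, ho, hm, zero_sub, neg_inj] at e1
      subst e1
      have e2 : (⟨m, h m.2⟩ : L.lattice) = ⟨m', h m'.2⟩ := sub_left_injective e
      simp only [Subtype.mk.injEq] at e2
      rw [Subtype.ext e2]
    · intro l
      have : l + Quotient.out (Submodule.Quotient.mk (-l) : L.lattice ⧸ subM M L) ∈ subM M L := by
        rw [← Submodule.Quotient.mk_eq_zero, Submodule.Quotient.mk_add, ho,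
          Submodule.Quotient.mk_neg, add_neg_cancel]
      refine ⟨(Submodule.Quotient.mk (-l), ⟨_, this⟩), ?_⟩
      ext
      simp

lemma G_eq (M L : PeriodPair) (h : M.lattice ≤ L.lattice) [Fintype (L.lattice ⧸ subM M L)]
    (k : ℕ) (hk : 2 < k) :
    L.G k = ∑ q : L.lattice ⧸ subM M L, M.sumInvPow (Quotient.out q : L.lattice) k := by
  have hs : Summable fun l : L.lattice => ((l : ℂ)^k)⁻¹ := by
    simpa using (L.hasSum_sumInvPow 0 hk).summable
  rw [PeriodPair.G, ← (cosetEquiv M L h).tsum_eq]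
  refine (Summable.tsum_prod ((cosetEquiv M L h).summable_iff.mpr hs)).trans ?_
  rw [tsum_fintype]
  refine Finset.sum_congr rfl fun q _ => ?_
  rw [PeriodPair.sumInvPow]
  exact tsum_congr fun c => rfl

lemma isog (M L : PeriodPair) (h : M.lattice ≤ L.lattice) (h2 : M.g₂ ∈ QA) (h3 : M.g₃ ∈ QA) :
    L.g₂ ∈ QA ∧ L.g₃ ∈ QA := by
  have := fin_quot M L h
  have := Fintype.ofFinite (L.lattice ⧸ subM M L)
  obtain ⟨N, hN, hNz⟩ := exists_N M L h
  have key : ∀ q : L.lattice ⧸ subM M L, _ := fun q =>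
    sum_alg_s3 M h2 h3 N hN (Quotient.out q : L.lattice) (hNz _ (Quotient.out q : L.lattice).2)
  rw [PeriodPair.g₂, PeriodPair.g₃, G_eq M L h 4 (by norm_num), G_eq M L h 6 (by norm_num)]
  exact ⟨mul_mem (ofNat_mem QA 60) (sum_mem fun q _ => (key q).1),
    mul_mem (ofNat_mem QA 140) (sum_mem fun q _ => (key q).2)⟩

lemma exists_pair (Λ : AddSubgroup ℂ) (hd : DiscreteTopology Λ)
    (hs : Submodule.span ℝ (Λ : Set ℂ) = ⊤) :
    ∃ L : PeriodPair, ∀ z, z ∈ L.lattice ↔ z ∈ Λ := by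
  let S : Submodule ℤ ℂ := AddSubgroup.toIntSubmodule Λ
  have : DiscreteTopology S := hd
  have : IsZLattice ℝ S := ⟨hs⟩
  have : Module.Finite ℤ S := ZLattice.module_finite ℝ S
  have : Module.Free ℤ S := ZLattice.module_free ℝ S
  have hr : Module.finrank ℤ S = 2 := by rw [ZLattice.rank ℝ S, Complex.finrank_real_complex]
  let b := Module.finBasisOfFinrankEq ℤ S hr
  let B := b.ofZLatticeBasis ℝ S
  have hB : (![B 0, B 1] : Fin 2 → ℂ) = B := by ext i; fin_cases i <;> rfl
  refine ⟨⟨B 0, B 1, by rw [hB]; exact B.linearIndependent⟩, fun z => ?_⟩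
  have e : Submodule.span ℤ (Set.range B) = S := b.ofZLatticeBasis_span ℝ
  have e2 : Set.range B = {B 0, B 1} := by
    rw [← hB]; simp [Set.pair_comm]
  rw [PeriodPair.lattice, ← e2, e]
  rfl

lemma g_pair (Λ : AddSubgroup ℂ) (L : PeriodPair) (h : ∀ z, z ∈ L.lattice ↔ z ∈ Λ) :
    g₂ Λ = L.g₂ ∧ g₃ Λ = L.g₃ := by
  have key : ∀ k, k ≠ 0 → ∑' w : {w : ℂ // w ∈ Λ ∧ w ≠ 0}, ((w : ℂ) ^ k)⁻¹ = L.G k := by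
    intro k hk
    rw [PeriodPair.G]
    have h1 := tsum_subtype (L.lattice : Set ℂ) (fun w : ℂ => (w^k)⁻¹)
    have h2 := tsum_subtype {w : ℂ | w ∈ Λ ∧ w ≠ 0} (fun w : ℂ => (w^k)⁻¹)
    refine h2.trans (Eq.trans ?_ h1.symm)
    congr 1
    ext w
    by_cases hw : w ∈ Λ
    · by_cases h0 : w = 0
      · subst h0; simp [hk]
      · simp [Set.indicator, hw, h0, h]
    · simp [Set.indicator, hw, h]
  rw [g₂, g₃, PeriodPair.g₂, PeriodPair.g₃, key 4 (by norm_num), key 6 (by norm_num)]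
  exact ⟨rfl, rfl⟩

/-- Scaling a period pair. -/
noncomputable def scale (L : PeriodPair) (α : ℂ) (hα : α ≠ 0) : PeriodPair where
  ω₁ := α * L.ω₁
  ω₂ := α * L.ω₂
  indep := by
    have := L.indep
    rw [LinearIndependent.pair_iff] at this ⊢
    intro s t hst
    apply this s t
    apply mul_left_cancel₀ hα
    simp only [Complex.real_smul] at hst ⊢
    linear_combination hst

lemma mem_scale (L : PeriodPair) (α : ℂ) (hα : α ≠ 0) (z : ℂ) :
    z ∈ (scale L α hα).lattice ↔ ∃ w ∈ L.lattice, α * w = z := by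
  constructor
  · intro h
    obtain ⟨m, n, rfl⟩ := PeriodPair.mem_lattice.mp h
    exact ⟨m * L.ω₁ + n * L.ω₂, PeriodPair.mem_lattice.mpr ⟨m, n, rfl⟩, by simp [scale]; ring⟩
  · rintro ⟨w, h, rfl⟩
    obtain ⟨m, n, rfl⟩ := PeriodPair.mem_lattice.mp h
    exact PeriodPair.mem_lattice.mpr ⟨m, n, by simp [scale]; ring⟩

lemma scale_G (L : PeriodPair) (α : ℂ) (hα : α ≠ 0) (k : ℕ) :
    (scale L α hα).G k = (α^k)⁻¹ * L.G k := by
  let e : L.lattice ≃ (scale L α hα).lattice :=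
    Equiv.ofBijective (fun w => ⟨α * w, (mem_scale L α hα _).mpr ⟨w, w.2, rfl⟩⟩) <| by
      constructor
      · intro a b h
        simp only [Subtype.mk.injEq] at h
        exact Subtype.ext (mul_left_cancel₀ hα h)
      · rintro ⟨z, hz⟩
        obtain ⟨w, hw, rfl⟩ := (mem_scale L α hα _).mp hz
        exact ⟨⟨w, hw⟩, rfl⟩
  rw [PeriodPair.G, PeriodPair.G, ← e.tsum_eq, ← tsum_mul_left]
  refine tsum_congr fun w => ?_
  have : ((e w : (scale L α hα).lattice) : ℂ) = α * w := rfl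
  rw [this, mul_pow, mul_inv]

lemma scale_g (L : PeriodPair) (α : ℂ) (hα : α ≠ 0) :
    (scale L α hα).g₂ = (α^4)⁻¹ * L.g₂ ∧ (scale L α hα).g₃ = (α^6)⁻¹ * L.g₃ := by
  simp only [PeriodPair.g₂, PeriodPair.g₃, scale_G]
  constructor <;> ring

lemma main_pair (L L' : PeriodPair) (h2 : L.g₂ ∈ QA) (h3 : L.g₃ ∈ QA) (α : ℂ) (hα : α ≠ 0)
    (hsub : ∀ z ∈ L.lattice, α * z ∈ L'.lattice) :
    α ∈ QA ↔ (L'.g₂ ∈ QA ∧ L'.g₃ ∈ QA) := by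
  obtain ⟨s2, s3⟩ := scale_g L α hα
  have hle : (scale L α hα).lattice ≤ L'.lattice := by
    intro z hz
    obtain ⟨w, hw, rfl⟩ := (mem_scale L α hα _).mp hz
    exact hsub w hw
  constructor
  · intro ha
    apply isog _ _ hle
    · rw [s2]; exact mul_mem (inv_mem (pow_mem ha 4)) h2
    · rw [s3]; exact mul_mem (inv_mem (pow_mem ha 6)) h3
  · rintro ⟨h2', h3'⟩
    obtain ⟨N, hN, hNz⟩ := exists_N _ _ hle
    have hN' : (N : ℂ) ≠ 0 := Nat.cast_ne_zero.mpr hN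
    obtain ⟨t2, t3⟩ := scale_g L' N hN'
    have hle' : (scale L' N hN').lattice ≤ (scale L α hα).lattice := by
      intro z hz
      obtain ⟨w, hw, rfl⟩ := (mem_scale L' N hN' _).mp hz
      exact hNz w hw
    have hNA : (N : ℂ) ∈ QA := natCast_mem QA N
    obtain ⟨u2, u3⟩ := isog _ _ hle'
      (by rw [t2]; exact mul_mem (inv_mem (pow_mem hNA 4)) h2')
      (by rw [t3]; exact mul_mem (inv_mem (pow_mem hNA 6)) h3')
    rw [s2] at u2
    rw [s3] at u3
    have root : ∀ k : ℕ, k ≠ 0 → ∀ g : ℂ, g ≠ 0 → g ∈ QA → (α^k)⁻¹ * g ∈ QA → α ∈ QA := by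
      intro k hk g hg hgA hu
      have : α^k = g / ((α^k)⁻¹ * g) := by
        have := pow_ne_zero k hα
        field_simp
      have hp : α^k ∈ QA := by rw [this]; exact div_mem hgA hu
      exact mem_QA.mpr ((mem_QA.mp hp).of_pow (Nat.pos_of_ne_zero hk))
    by_cases hg : L.g₂ = 0
    · have hg3 : L.g₃ ≠ 0 := fun h => g_ne L ⟨hg, h⟩
      exact root 6 (by norm_num) _ hg3 h3 u3
    · exact root 4 (by norm_num) _ hg h2 u2

end

/-- Let `Λ` and `Λ'` be lattices in `ℂ` with CM by `R = τ(𝓞 K)` such that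
`g₂ Λ`, `g₃ Λ` are algebraic over `ℚ`, and let `α ≠ 0` with `α·Λ ⊆ Λ'`. Then `α` is algebraic
over `ℚ` iff both `g₂ Λ'` and `g₃ Λ'` are algebraic over `ℚ`. -/
theorem stmt_3
    (K : Type*) [Field K] [NumberField K]
    (hdeg : Module.finrank ℚ K = 2)
    (hcplx : IsEmpty (K →+* ℝ))
    (τ : K →+* ℂ)
    (Λ Λ' : AddSubgroup ℂ)
    (hdisc : DiscreteTopology Λ) (hdisc' : DiscreteTopology Λ')
    (hspan : Submodule.span ℝ (Λ : Set ℂ) = ⊤)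
    (hspan' : Submodule.span ℝ (Λ' : Set ℂ) = ⊤)
    (hCM : {z : ℂ | ∀ w ∈ Λ, z * w ∈ Λ} =
      Set.range fun a : 𝓞 K => τ (algebraMap (𝓞 K) K a))
    (hCM' : {z : ℂ | ∀ w ∈ Λ', z * w ∈ Λ'} =
      Set.range fun a : 𝓞 K => τ (algebraMap (𝓞 K) K a))
    (h2 : IsAlgebraic ℚ (g₂ Λ)) (h3 : IsAlgebraic ℚ (g₃ Λ))
    (α : ℂ) (hα : α ≠ 0)
    (hsub : ∀ z ∈ Λ, α * z ∈ Λ') :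
    IsAlgebraic ℚ α ↔ (IsAlgebraic ℚ (g₂ Λ') ∧ IsAlgebraic ℚ (g₃ Λ')) := by
  obtain ⟨L, hL⟩ := exists_pair Λ hdisc hspan
  obtain ⟨L', hL'⟩ := exists_pair Λ' hdisc' hspan'
  obtain ⟨a2, a3⟩ := g_pair Λ L hL
  obtain ⟨b2, b3⟩ := g_pair Λ' L' hL'
  rw [a2, ← mem_QA] at h2
  rw [a3, ← mem_QA] at h3
  rw [b2, b3, ← mem_QA, ← mem_QA, ← mem_QA]
  exact main_pair L L' h2 h3 α hα fun z hz => (hL' _).mpr (hsub z ((hL z).mp hz))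
end

section
/- Let Λ be a lattice in ℂ with complex multiplication by R such that g₂(Λ) and g₃(Λ) are algebraic over ℚ, and let 𝔞 be a nonzero fractional ideal of 𝓞_K (so that g₂(𝔞·Λ) and g₃(𝔞·Λ) are also algebraic over ℚ, which we assume). Let M be a lattice with g₂(M) = σ(g₂(Λ)) and g₃(M) = σ(g₃(Λ)), and let N be a lattice with g₂(N) = σ(g₂(𝔞·Λ)) and g₃(N) = σ(g₃(𝔞·Λ)). Then N equals the additive subgroup of ℂ generated by {σ(τ(a))·m : a ∈ 𝔞, m ∈ M}, i.e. N = σ(𝔞)·M. -/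
open NumberField

namespace CMaux
open PowerSeries

noncomputable def DD {F : Type*} [Field F] (A : F⟦X⟧) : F⟦X⟧ :=
  PowerSeries.mk fun n => ((n : F) - 2) * coeff n A

def ODE {F : Type*} [Field F] (A : F⟦X⟧) (a b : F) : Prop :=
  constantCoeff A = 1 ∧ (DD A) ^ 2 = 4 * A ^ 3 - C a * X ^ 4 * A - C b * X ^ 6

lemma map4 {k F : Type*} [Field k] [Field F] (ι : k →+* F) :
    PowerSeries.map ι (4 : k⟦X⟧) = 4 := map_ofNat _ 4

lemma cc4 {F : Type*} [Field F] : constantCoeff (4 : F⟦X⟧) = 4 := map_ofNat _ 4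
lemma cc2 {F : Type*} [Field F] : constantCoeff (2 : F⟦X⟧) = 2 := map_ofNat _ 2
lemma cc12 {F : Type*} [Field F] : constantCoeff (12 : F⟦X⟧) = 12 := map_ofNat _ 12

lemma ccmap {k F : Type*} [Field k] [Field F] (ι : k →+* F) (A : k⟦X⟧) :
    constantCoeff (PowerSeries.map ι A) = ι (constantCoeff A) := by
  rw [← coeff_zero_eq_constantCoeff_apply, coeff_map, coeff_zero_eq_constantCoeff_apply]

lemma coeff_DD {F : Type*} [Field F] (A : F⟦X⟧) (n : ℕ) :
    coeff n (DD A) = ((n : F) - 2) * coeff n A := by simp [DD]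

lemma constantCoeff_DD {F : Type*} [Field F] (A : F⟦X⟧) :
    constantCoeff (DD A) = -2 * constantCoeff A := by
  rw [← coeff_zero_eq_constantCoeff_apply, coeff_DD]; simp

lemma DD_step {F : Type*} [Field F] {A T : F⟦X⟧} (n : ℕ)
    (h : ∀ i < n, coeff i A = coeff i T) : ∃ R S : F⟦X⟧, A = T + X ^ n * R ∧
      DD A = DD T + X ^ n * S ∧ constantCoeff S = ((n : F) - 2) * constantCoeff R := by
  obtain ⟨R, hR⟩ : X ^ n ∣ A - T := X_pow_dvd_iff.2 fun i hi => by simp [h i hi]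
  obtain ⟨S, hS⟩ : X ^ n ∣ DD A - DD T := X_pow_dvd_iff.2 fun i hi => by
    simp [coeff_DD, h i hi]
  refine ⟨R, S, by rw [← hR]; ring, by rw [← hS]; ring, ?_⟩
  have h1 := congrArg (coeff n) hR
  have h2 := congrArg (coeff n) hS
  rw [coeff_X_pow_mul'] at h1 h2
  simp [coeff_DD] at h1 h2
  rw [← h1, ← h2]; ring

lemma ODE_unique {F : Type*} [Field F] [CharZero F] {A B : F⟦X⟧} {a b : F}
    (hA : ODE A a b) (hB : ODE B a b) : A = B := by
  ext n
  induction n using Nat.strong_induction_on with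
  | _ n ih =>
    rcases Nat.eq_zero_or_pos n with rfl | hn
    · simp [hA.1, hB.1]
    obtain ⟨R, S, h1, h2, h3⟩ := DD_step n ih
    have e : X ^ n * (S * (DD A + DD B)) =
        X ^ n * (R * (4 * (A ^ 2 + A * B + B ^ 2) - C a * X ^ 4)) := by
      have e1 := hA.2
      have e2 := hB.2
      linear_combination e1 - e2 - (DD A + DD B) * h2 +
        (4 * (A ^ 2 + A * B + B ^ 2) - C a * X ^ 4) * h1
    have e' := mul_left_cancel₀ (pow_ne_zero n X_ne_zero) e
    have e'' := congrArg constantCoeff e'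
    simp [constantCoeff_DD, hA.1, hB.1, h3, cc4] at e''
    have : ((n : F) + 1) * constantCoeff R = 0 := by
      linear_combination (-1/4 : F) * e''
    have hR : constantCoeff R = 0 := by
      rcases mul_eq_zero.1 this with h | h
      · exact absurd h (by exact_mod_cast Nat.succ_ne_zero n)
      · exact h
    rw [h1]
    simp [coeff_X_pow_mul', hR]

lemma DD_map {k F : Type*} [Field k] [Field F] (ι : k →+* F) (A : k⟦X⟧) :
    DD (PowerSeries.map ι A) = PowerSeries.map ι (DD A) := by
  ext n; rw [coeff_DD, coeff_map, coeff_map, coeff_DD, map_mul, map_sub, map_natCast, map_ofNat]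

lemma ODE_map {k F : Type*} [Field k] [Field F] (ι : k →+* F) {A : k⟦X⟧} {a b : k}
    (h : ODE A a b) : ODE (PowerSeries.map ι A) (ι a) (ι b) := by
  refine ⟨by rw [ccmap, h.1, map_one], ?_⟩
  rw [DD_map, ← map_pow, h.2]
  simp [map4]

lemma ODE_of_map {k F : Type*} [Field k] [Field F] (ι : k →+* F) {A : k⟦X⟧} {a b : k}
    (h : ODE (PowerSeries.map ι A) (ι a) (ι b)) : ODE A a b := by
  refine ⟨ι.injective (by rw [← ccmap, h.1, map_one]), ?_⟩
  apply PowerSeries.map_injective ι ι.injective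
  rw [map_pow, ← DD_map, h.2]
  simp [map4]

lemma ODE_range {k F : Type*} [Field k] [Field F] [CharZero F] (ι : k →+* F) {A : F⟦X⟧} {a b : k}
    (h : ODE A (ι a) (ι b)) : ∃ A₀ : k⟦X⟧, PowerSeries.map ι A₀ = A := by
  suffices H : ∀ n, ∃ c, ι c = coeff n A by
    choose c hc using H
    exact ⟨PowerSeries.mk c, by ext n; simp [hc]⟩
  intro n
  induction n using Nat.strong_induction_on with
  | _ n ih =>
    rcases Nat.eq_zero_or_pos n with rfl | hn
    · exact ⟨1, by simp [h.1]⟩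
    choose! c hc using ih
    set T₀ : k⟦X⟧ := PowerSeries.mk fun i => if i < n then c i else 0 with hT₀
    set T := PowerSeries.map ι T₀ with hT
    have hTA : ∀ i < n, coeff i A = coeff i T := fun i hi => by
      simp [hT, hT₀, hi, hc i hi]
    have hTn : coeff n T = 0 := by simp [hT, hT₀]
    have hT1 : constantCoeff T = 1 := by
      have := hTA 0 hn
      simp only [coeff_zero_eq_constantCoeff] at this
      rw [← this, h.1]
    obtain ⟨R, S, h1, h2, h3⟩ := DD_step n hTA
    have e := h.2
    rw [h2, h1] at e
    have e2 : X ^ n * (2 * DD T * S + X ^ n * S ^ 2 - 12 * T ^ 2 * R - 12 * T * X ^ n * R ^ 2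
        - 4 * (X ^ n) ^ 2 * R ^ 3 + C (ι a) * X ^ 4 * R) = 
        4 * T ^ 3 - C (ι a) * X ^ 4 * T - C (ι b) * X ^ 6 - DD T ^ 2 := by
      linear_combination e
    have e3 := congrArg (coeff n) e2
    rw [coeff_X_pow_mul'] at e3
    have hn0 : n ≠ 0 := hn.ne'
    simp only [le_refl, if_true, Nat.sub_self, coeff_zero_eq_constantCoeff] at e3
    have e4 : (4 * T ^ 3 - C (ι a) * X ^ 4 * T - C (ι b) * X ^ 6 - DD T ^ 2) =
      PowerSeries.map ι (4 * T₀ ^ 3 - C a * X ^ 4 * T₀ - C b * X ^ 6 - DD T₀ ^ 2) := by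
      simp [hT, DD_map, map4]
    rw [e4, coeff_map] at e3
    generalize coeff n (4 * T₀ ^ 3 - C a * X ^ 4 * T₀ - C b * X ^ 6 - DD T₀ ^ 2) = q at e3
    simp [constantCoeff_DD, hT1, h3, hn0, cc2, cc4, cc12] at e3
    have hA : coeff n A = constantCoeff R := by
      rw [h1]; simp [coeff_X_pow_mul', hTn]
    have hne : ((n : F) + 1) ≠ 0 := by exact_mod_cast Nat.succ_ne_zero n
    refine ⟨q / (-4 * ((n : k) + 1)), ?_⟩
    · rw [map_div₀, hA, eq_comm, eq_div_iff]
      · rw [← e3]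
        simp [map_ofNat]
        ring
      · simp [hne, map_ofNat]
open Filter Topology
open scoped PeriodPair

def Rep (f : ℂ → ℂ) (p : ℂ⟦X⟧) : Prop :=
  ∀ᶠ z in 𝓝 (0 : ℂ), HasSum (fun n => coeff n p * z ^ n) (f z)

lemma Rep.add {f g : ℂ → ℂ} {p q : ℂ⟦X⟧} (hf : Rep f p) (hg : Rep g q) :
    Rep (fun z => f z + g z) (p + q) := by
  filter_upwards [hf, hg] with z h1 h2
  simpa [add_mul] using h1.add h2

lemma Rep.mul {f g : ℂ → ℂ} {p q : ℂ⟦X⟧} (hf : Rep f p) (hg : Rep g q) :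
    Rep (fun z => f z * g z) (p * q) := by
  filter_upwards [hf, hg] with z h1 h2
  have s1 := h1.summable.norm
  have s2 := h2.summable.norm
  have s3 := (summable_norm_sum_mul_antidiagonal_of_summable_norm s1 s2).of_norm
  have e := tsum_mul_tsum_eq_tsum_sum_antidiagonal_of_summable_norm s1 s2
  rw [h1.tsum_eq, h2.tsum_eq] at e
  rw [e]
  have e5 : (fun n => coeff n (p * q) * z ^ n) = fun n =>
      ∑ kl ∈ Finset.HasAntidiagonal.antidiagonal n, (coeff kl.1 p * z ^ kl.1) * (coeff kl.2 q * z ^ kl.2) := by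
    ext n
    rw [coeff_mul, Finset.sum_mul]
    refine Finset.sum_congr rfl fun x hx => ?_
    rw [← Finset.HasAntidiagonal.mem_antidiagonal.1 hx, pow_add]; ring
  rw [e5]
  exact s3.hasSum

lemma Rep.const (c : ℂ) : Rep (fun _ => c) (C c) := by
  refine Eventually.of_forall fun z => ?_
  convert hasSum_single (f := fun n => coeff n (C c) * z ^ n) 0 ?_ using 1
  · simp
  · intro n hn; simp [coeff_C, hn]

lemma Rep.id : Rep (fun z => z) X := by
  refine Eventually.of_forall fun z => ?_
  convert hasSum_single (f := fun n => coeff n (X : ℂ⟦X⟧) * z ^ n) 1 ?_ using 1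
  · simp
  · intro n hn; simp [coeff_X, hn]

lemma Rep.pow {f : ℂ → ℂ} {p : ℂ⟦X⟧} (hf : Rep f p) (n : ℕ) :
    Rep (fun z => f z ^ n) (p ^ n) := by
  induction n with
  | zero => simpa using Rep.const 1
  | succ n ih => simpa [pow_succ] using ih.mul hf

lemma Rep.sum {f : ℕ → ℂ → ℂ} {p : ℕ → ℂ⟦X⟧} (s : Finset ℕ) (h : ∀ i, Rep (f i) (p i)) :
    Rep (fun z => ∑ i ∈ s, f i z) (∑ i ∈ s, p i) := by
  classical
  induction s using Finset.induction_on with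
  | empty => simpa using Rep.const 0
  | insert a s ha ih => simpa [Finset.sum_insert ha] using (h a).add ih

lemma Rep.hasF {f : ℂ → ℂ} {p : ℂ⟦X⟧} (hf : Rep f p) :
    HasFPowerSeriesAt f (FormalMultilinearSeries.ofScalars ℂ fun n => coeff n p) 0 := by
  rw [hasFPowerSeriesAt_iff]
  filter_upwards [hf] with z hz
  simpa [mul_comm] using hz

lemma Rep.of_hasF {f : ℂ → ℂ} {c : ℕ → ℂ}
    (hf : HasFPowerSeriesAt f (FormalMultilinearSeries.ofScalars ℂ c) 0) :
    Rep f (PowerSeries.mk c) := by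
  rw [hasFPowerSeriesAt_iff] at hf
  filter_upwards [hf] with z hz
  simpa [mul_comm] using hz

lemma Rep.unique {f g : ℂ → ℂ} {p q : ℂ⟦X⟧} (hf : Rep f p) (hg : Rep g q)
    (h : ∀ᶠ z in 𝓝[≠] (0 : ℂ), f z = g z) : p = q := by
  have h' := (hf.hasF.analyticAt.frequently_eq_iff_eventually_eq hg.hasF.analyticAt).1 h.frequently
  have e := (hf.hasF.congr h').eq_formalMultilinearSeries hg.hasF
  ext n
  simpa using congrArg (fun s => s.coeff n) e

noncomputable def Aser (L : PeriodPair) : ℂ⟦X⟧ :=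
  1 + X ^ 2 * PowerSeries.mk (fun i => if i = 0 then 0 else ((i : ℂ) + 1) * L.G (i + 2))

noncomputable def afun (L : PeriodPair) (z : ℂ) : ℂ := 1 + z ^ 2 * L.weierstrassPExcept 0 z

lemma rep_Aser (L : PeriodPair) : Rep (afun L) (Aser L) := by
  have h := L.hasFPowerSeriesAt_weierstrassPExcept 0
  simp only [PeriodPair.weierstrassPExcept_zero, PeriodPair.sumInvPow_zero] at h
  have h2 := (Rep.const 1).add ((Rep.id.pow 2).mul (Rep.of_hasF h))
  simp only [map_one] at h2
  exact h2

lemma DD_Aser (L : PeriodPair) : DD (Aser L) = C (-2) + X ^ 3 *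
    PowerSeries.mk (fun i : ℕ => ((i : ℂ) + 1) * (i + 2) * L.G (i + 3)) := by
  ext n
  rw [DD, Aser, coeff_mk, map_add, map_add, coeff_X_pow_mul', coeff_X_pow_mul', coeff_one, coeff_C]
  rcases n with _ | _ | _ | n
  · simp
  · simp
  · simp
  · simp
    ring_nf

lemma rep_DD_Aser (L : PeriodPair) :
    Rep (fun z => -2 + z ^ 3 * L.derivWeierstrassPExcept 0 z) (DD (Aser L)) := by
  have h := L.hasFPowerSeriesAt_derivWeierstrassPExcept 0
  simp only [PeriodPair.sumInvPow_zero] at h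
  have h2 := (Rep.const (-2)).add ((Rep.id.pow 3).mul (Rep.of_hasF h))
  rw [DD_Aser]
  exact h2

lemma ev_notMem (L : PeriodPair) : ∀ᶠ z in 𝓝[≠] (0 : ℂ), z ∉ L.lattice := by
  filter_upwards [self_mem_nhdsWithin, mem_nhdsWithin_of_mem_nhds
    (L.compl_lattice_sdiff_singleton_mem_nhds 0)] with w hw hw'
  simp_all

lemma afun_eq (L : PeriodPair) {z : ℂ} (hz : z ≠ 0) : afun L z = z ^ 2 * L.weierstrassP z := by
  have := L.weierstrassPExcept_add 0 z
  simp at this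
  rw [← this, afun]
  field_simp
  ring

lemma ODE_Aser (L : PeriodPair) : ODE (Aser L) L.g₂ L.g₃ := by
  refine ⟨by simp [Aser], ?_⟩
  have h1 := (rep_DD_Aser L).pow 2
  have hA := rep_Aser L
  have h2 := (((Rep.const 4).mul (hA.pow 3)).add
    (((Rep.const (-L.g₂)).mul (Rep.id.pow 4)).mul hA)).add ((Rep.const (-L.g₃)).mul (Rep.id.pow 6))
  have := h1.unique h2 ?_
  · rw [this, show C (4 : ℂ) = 4 from map_ofNat _ 4]
    simp only [map_neg]
    ring
  · filter_upwards [ev_notMem L, self_mem_nhdsWithin] with z hz hz0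
    have hz0 : z ≠ 0 := hz0
    have e := L.derivWeierstrassP_sq z hz
    have e2 := L.derivWeierstrassPExcept_sub 0 z
    simp at e2
    have e3 : -2 + z ^ 3 * L.derivWeierstrassPExcept 0 z = z ^ 3 * L.derivWeierstrassP z := by
      rw [← e2]; field_simp; ring
    rw [e3, afun_eq L hz0]
    linear_combination z ^ 6 * e

noncomputable def Ssum {F : Type*} [Field F] (A : F⟦X⟧) (D : ℕ) (p : ℕ → F) (B : F⟦X⟧) : F⟦X⟧ :=
  ∑ i ∈ Finset.range (D + 1), C (p i) * (A ^ i * X ^ (2 * (D - i)) * B)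

lemma Ssum_map {k F : Type*} [Field k] [Field F] (ι : k →+* F) (A : k⟦X⟧) (D : ℕ) (p : ℕ → k)
    (B : k⟦X⟧) : Ssum (PowerSeries.map ι A) D (fun i => ι (p i)) (PowerSeries.map ι B) =
      PowerSeries.map ι (Ssum A D p B) := by
  simp [Ssum]

lemma Ssum_descend {k F : Type*} [Field k] [Field F] (ι : k →+* F) (A B B' : k⟦X⟧) (D : ℕ)
    (p q : ℕ → F) (h : Ssum (PowerSeries.map ι A) D p (PowerSeries.map ι B) =
      Ssum (PowerSeries.map ι A) D q (PowerSeries.map ι B')) (j : ℕ) (hj : q j ≠ 0) :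
    ∃ p' q' : ℕ → k, Ssum A D p' B = Ssum A D q' B' ∧ q' j ≠ 0 := by
  let _ := ι.toAlgebra
  obtain ⟨φ, hφ⟩ : ∃ φ : Module.Dual k F, φ (q j) ≠ 0 := by
    by_contra! H
    exact hj ((Module.forall_dual_apply_eq_zero_iff k (q j)).1 H)
  refine ⟨fun i => φ (p i), fun i => φ (q i), ?_, hφ⟩
  have key : ∀ (p : ℕ → F) (B : k⟦X⟧) (n : ℕ), 
      φ (coeff n (Ssum (PowerSeries.map ι A) D p (PowerSeries.map ι B))) =
        coeff n (Ssum A D (fun i => φ (p i)) B) := by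
    intro p B n
    simp only [Ssum, map_sum, coeff_C_mul]
    refine Finset.sum_congr rfl fun i _ => ?_
    have : (PowerSeries.map ι A ^ i * X ^ (2 * (D - i)) * PowerSeries.map ι B) =
      PowerSeries.map ι (A ^ i * X ^ (2 * (D - i)) * B) := by simp
    rw [this, coeff_map, mul_comm]
    change φ ((coeff n (A ^ i * X ^ (2 * (D - i)) * B)) • p i) = _
    rw [map_smul, smul_eq_mul, mul_comm]
  ext n
  rw [← key, ← key, h]

lemma Rep.ssum {f g : ℂ → ℂ} {A B : ℂ⟦X⟧} (hf : Rep f A) (hg : Rep g B) (D : ℕ) (p : ℕ → ℂ) :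
    Rep (fun z => ∑ i ∈ Finset.range (D + 1), p i * (f z ^ i * z ^ (2 * (D - i)) * g z))
      (Ssum A D p B) :=
  Rep.sum _ fun i => (Rep.const _).mul (((hf.pow i).mul (Rep.id.pow _)).mul hg)

lemma ssum_val (L : PeriodPair) (D : ℕ) (p : ℕ → ℂ) (g : ℂ) {z : ℂ} (hz : z ≠ 0) :
    ∑ i ∈ Finset.range (D + 1), p i * (afun L z ^ i * z ^ (2 * (D - i)) * g) =
     z ^ (2 * D) * g * ∑ i ∈ Finset.range (D + 1), p i * L.weierstrassP z ^ i := by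
  rw [Finset.mul_sum]
  refine Finset.sum_congr rfl fun i hi => ?_
  have : i ≤ D := by simpa [Nat.lt_succ_iff] using hi
  obtain ⟨m, rfl⟩ := Nat.exists_eq_add_of_le this
  rw [afun_eq L hz, Nat.add_sub_cancel_left]
  ring

/-- relation transfer -/
lemma rel_to_series (L L' : PeriodPair) (D : ℕ) (p q : ℕ → ℂ)
    (h : ∀ᶠ z in 𝓝[≠] (0 : ℂ), ∑ i ∈ Finset.range (D + 1), p i * L.weierstrassP z ^ i =
      (∑ i ∈ Finset.range (D + 1), q i * L.weierstrassP z ^ i) * L'.weierstrassP z) :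
    Ssum (Aser L) D p (X ^ 2) = Ssum (Aser L) D q (Aser L') := by
  refine ((rep_Aser L).ssum (Rep.id.pow 2) D p).unique ((rep_Aser L).ssum (rep_Aser L') D q) ?_
  filter_upwards [h, self_mem_nhdsWithin] with z hz hz0
  rw [ssum_val L D p _ hz0, ssum_val L D q _ hz0, hz, afun_eq L' hz0]
  ring

lemma series_to_rel (L L' : PeriodPair) (D : ℕ) (p q : ℕ → ℂ)
    (h : Ssum (Aser L) D p (X ^ 2) = Ssum (Aser L) D q (Aser L')) :
    ∀ᶠ z in 𝓝[≠] (0 : ℂ), ∑ i ∈ Finset.range (D + 1), p i * L.weierstrassP z ^ i =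
      (∑ i ∈ Finset.range (D + 1), q i * L.weierstrassP z ^ i) * L'.weierstrassP z := by
  have h1 := (rep_Aser L).ssum (Rep.id.pow 2) D p
  have h2 := (rep_Aser L).ssum (rep_Aser L') D q
  rw [← h] at h2
  filter_upwards [mem_nhdsWithin_of_mem_nhds h1, mem_nhdsWithin_of_mem_nhds h2,
    self_mem_nhdsWithin] with z a b hz0
  have e := HasSum.unique a b
  rw [ssum_val L D p _ hz0, ssum_val L D q _ hz0, afun_eq L' hz0] at e
  have hz0 : z ≠ 0 := hz0
  have : z ^ (2 * D) * z ^ 2 ≠ 0 := by positivity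
  apply mul_left_cancel₀ this
  rw [e]; ring
lemma an_factor {g : ℂ → ℂ} {x : ℂ} (hg : AnalyticAt ℂ g x) (h0 : g x = 0) :
    ∃ k, AnalyticAt ℂ k x ∧ ∀ᶠ z in 𝓝 x, g z = (z - x) * k z := by
  have : ((1 : ℕ) : ℕ∞) ≤ analyticOrderAt g x := by
    rw [Nat.cast_one, Order.one_le_iff_ne_zero]
    exact hg.analyticOrderAt_ne_zero.2 h0
  obtain ⟨k, hk, e⟩ := (natCast_le_analyticOrderAt hg).1 this
  exact ⟨k, hk, by simpa using e⟩

lemma liouville (L : PeriodPair) (f : ℂ → ℂ) (hper : ∀ z, ∀ l ∈ L.lattice, f (z + l) = f z)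
    (hreg : ∀ x, ∃ h, AnalyticAt ℂ h x ∧ f =ᶠ[𝓝[≠] x] h) :
    ∃ c, ∀ᶠ z in 𝓝[≠] (0 : ℂ), f z = c := by
  set g : ℂ → ℂ := fun x => limUnder (𝓝[≠] x) f with hg
  have hgx : ∀ x, ∃ h, AnalyticAt ℂ h x ∧ f =ᶠ[𝓝[≠] x] h ∧ g =ᶠ[𝓝 x] h := by
    intro x
    obtain ⟨h, hh, e⟩ := hreg x
    have key : ∀ y, f =ᶠ[𝓝[≠] y] h → AnalyticAt ℂ h y → g y = h y := by
      intro y e h1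
      have : Tendsto f (𝓝[≠] y) (𝓝 (h y)) :=
        (h1.continuousAt.tendsto.mono_left nhdsWithin_le_nhds).congr' e.symm
      exact this.limUnder_eq
    refine ⟨h, hh, e, ?_⟩
    have e1 : ∀ᶠ y in 𝓝[≠] x, f =ᶠ[𝓝[≠] y] h := by
      have := eventually_nhdsNE_eventually_nhds_iff.2 e
      filter_upwards [this] with y hy
      exact hy.filter_mono nhdsWithin_le_nhds
    rw [eventually_nhdsWithin_iff] at e1
    filter_upwards [e1, hh.eventually_analyticAt] with y hy hya
    by_cases hyx : y = x
    · subst hyx; exact key y e hya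
    · exact key y (hy hyx) hya
  have hdiff : Differentiable ℂ g := fun x => by
    obtain ⟨h, hh, e, e2⟩ := hgx x
    exact (hh.congr e2.symm).differentiableAt
  have hgper : ∀ z, ∀ l ∈ L.lattice, g (z + l) = g z := by
    intro z l hl
    obtain ⟨h, hh, e, e2⟩ := hgx z
    have t1 : Tendsto f (𝓝[≠] z) (𝓝 (g z)) := by
      rw [e2.self_of_nhds]
      exact (hh.continuousAt.tendsto.mono_left nhdsWithin_le_nhds).congr' e.symm
    have t2 : Tendsto (fun y => y - l) (𝓝[≠] (z + l)) (𝓝[≠] z) := by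
      refine tendsto_nhdsWithin_iff.2 ⟨?_, ?_⟩
      · have : Tendsto (fun y => y - l) (𝓝 (z + l)) (𝓝 (z + l - l)) :=
          (continuous_id.sub continuous_const).tendsto _
        rw [add_sub_cancel_right] at this
        exact this.mono_left nhdsWithin_le_nhds
      · filter_upwards [self_mem_nhdsWithin] with y hy
        intro h
        exact hy (by simp only [Set.mem_singleton_iff] at h ⊢; rw [← h]; ring)
    have t3 := t1.comp t2
    have : f ∘ (fun y => y - l) = f := by
      ext y
      have := hper (y - l) l hl
      simpa using this.symm
    rw [this] at t3
    exact t3.limUnder_eq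
  have hc : ∀ x, g x = g 0 := fun x => hdiff.apply_eq_apply_of_bounded
    (IsZLattice.isCompact_range_of_periodic L.lattice _
    hdiff.continuous fun z w hw ↦ hgper z w hw).isBounded x 0
  obtain ⟨h, hh, e, e2⟩ := hgx 0
  refine ⟨g 0, ?_⟩
  filter_upwards [e, mem_nhdsWithin_of_mem_nhds e2] with z h1 h2
  rw [h1, ← h2, hc]

lemma afun_an (L : PeriodPair) : AnalyticAt ℂ (afun L) 0 := by
  unfold afun
  have := L.analyticAt_weierstrassPExcept 0
  fun_prop

lemma ev_neg {P : ℂ → Prop} (h : ∀ᶠ z in 𝓝[≠] (0 : ℂ), P z) : ∀ᶠ z in 𝓝[≠] (0 : ℂ), P (-z) := by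
  have : Tendsto (fun z : ℂ => -z) (𝓝[≠] 0) (𝓝[≠] 0) := by
    refine tendsto_nhdsWithin_iff.2 ⟨?_, ?_⟩
    · have : Tendsto (fun z : ℂ => -z) (𝓝 0) (𝓝 (-0)) := continuous_neg.tendsto 0
      rw [neg_zero] at this
      exact this.mono_left nhdsWithin_le_nhds
    · filter_upwards [self_mem_nhdsWithin] with y hy
      simpa using hy
  exact this.eventually h

lemma an_neg {h : ℂ → ℂ} (hh : AnalyticAt ℂ h 0) : AnalyticAt ℂ (fun z => h (-z)) 0 := by
  have : AnalyticAt ℂ h (-0) := by simpa using hh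
  exact this.fun_comp (by fun_prop)

lemma even_poly (L : PeriodPair) (n : ℕ) : ∀ (f : ℂ → ℂ)
    (_ : ∀ z, ∀ l ∈ L.lattice, f (z + l) = f z) (_ : ∀ z, f (-z) = f z)
    (_ : ∀ x ∉ L.lattice, ∃ h, AnalyticAt ℂ h x ∧ f =ᶠ[𝓝[≠] x] h)
    (_ : ∃ h, AnalyticAt ℂ h 0 ∧ ∀ᶠ z in 𝓝[≠] (0 : ℂ), z ^ (2 * n) * f z = h z),
    ∃ P : Polynomial ℂ, ∀ᶠ z in 𝓝[≠] (0 : ℂ), f z = P.eval (L.weierstrassP z) := by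
  induction n with
  | zero =>
    intro f hper heven hreg hpole
    obtain ⟨c, hc⟩ := liouville L f hper (by
      intro x
      by_cases hx : x ∈ L.lattice
      · obtain ⟨h, hh, e⟩ := hpole
        refine ⟨fun z => h (z - x), ?_, ?_⟩
        · have : AnalyticAt ℂ h (x - x) := by simpa using hh
          exact this.fun_comp (f := fun z => z - x) (by fun_prop)
        · have t2 : Tendsto (fun y => y - x) (𝓝[≠] x) (𝓝[≠] 0) := by
            refine tendsto_nhdsWithin_iff.2 ⟨?_, ?_⟩
            · have : Tendsto (fun y => y - x) (𝓝 x) (𝓝 (x - x)) :=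
                (continuous_id.sub continuous_const).tendsto _
              rw [sub_self] at this
              exact this.mono_left nhdsWithin_le_nhds
            · filter_upwards [self_mem_nhdsWithin] with y hy
              simpa [sub_eq_zero] using hy
          filter_upwards [t2.eventually e] with y hy
          have := hper (y - x) x hx
          simp at this hy
          rw [this, hy]
      · exact hreg x hx)
    exact ⟨Polynomial.C c, by simpa using hc⟩
  | succ n ih =>
    intro f hper heven hreg ⟨h, hh, e⟩
    set f₁ : ℂ → ℂ := fun z => f z - h 0 * L.weierstrassP z ^ (n + 1) with hf₁
    have heven1 : ∀ z, f₁ (-z) = f₁ z := fun z => by simp [hf₁, heven]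
    set k : ℂ → ℂ := fun z => h z - h 0 * afun L z ^ (n + 1) with hk
    have hka : AnalyticAt ℂ k 0 := by
      have := afun_an L
      fun_prop
    have hkf : ∀ᶠ z in 𝓝[≠] (0 : ℂ), z ^ (2 * (n + 1)) * f₁ z = k z := by
      filter_upwards [e, self_mem_nhdsWithin] with z hz hz0
      simp only [hf₁, hk]
      rw [← hz, afun_eq L hz0]
      ring
    obtain ⟨k₁, hk₁, e₁⟩ := an_factor hka (by simp [hk, afun])
    have hodd : ∀ᶠ z in 𝓝[≠] (0 : ℂ), k₁ (-z) = - k₁ z := by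
      have e₁' : ∀ᶠ z in 𝓝[≠] (0 : ℂ), k z = (z - 0) * k₁ z := e₁.filter_mono nhdsWithin_le_nhds
      filter_upwards [hkf, ev_neg hkf, e₁', ev_neg e₁', self_mem_nhdsWithin] with z a b c d hz
      have hz : z ≠ 0 := hz
      rw [heven1, (show Even (2 * (n + 1)) by simp).neg_pow, a, c] at b
      rw [d] at b
      simp only [sub_zero] at b
      apply mul_left_cancel₀ hz
      linear_combination b
    have hk10 : k₁ 0 = 0 := by
      have t1 : Tendsto (fun z => k₁ (-z)) (𝓝[≠] 0) (𝓝 (k₁ 0)) := by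
        have := (an_neg hk₁).continuousAt.tendsto.mono_left (nhdsWithin_le_nhds (s := {0}ᶜ))
        simpa using this
      have t2 : Tendsto (fun z => - k₁ z) (𝓝[≠] 0) (𝓝 (- k₁ 0)) :=
        (hk₁.continuousAt.tendsto.mono_left (nhdsWithin_le_nhds (s := {0}ᶜ))).neg
      have := tendsto_nhds_unique (t1.congr' hodd) t2
      exact CharZero.eq_neg_self_iff.1 this
    obtain ⟨k₂, hk₂, e₂⟩ := an_factor hk₁ hk10
    obtain ⟨P, hP⟩ := ih f₁ (fun z l hl => by
        simp only [hf₁]; rw [hper z l hl, L.weierstrassP_add_coe z ⟨l, hl⟩]) heven1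
      (fun x hx => by
        obtain ⟨h', hh', e'⟩ := hreg x hx
        refine ⟨fun z => h' z - h 0 * L.weierstrassP z ^ (n + 1), ?_, ?_⟩
        · have := L.analyticOnNhd_weierstrassP x hx
          fun_prop
        · filter_upwards [e'] with z hz
          simp only [hf₁, hz])
      ⟨k₂, hk₂, by
        filter_upwards [hkf, mem_nhdsWithin_of_mem_nhds e₁, mem_nhdsWithin_of_mem_nhds e₂,
          self_mem_nhdsWithin] with z a b c hz
        have hz : z ≠ 0 := hz
        simp only [b, c] at a
        apply mul_left_cancel₀ (pow_ne_zero 2 hz)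
        rw [← mul_assoc, ← pow_add, show 2 + 2 * n = 2 * (n + 1) by ring, a]
        ring⟩
    refine ⟨P + Polynomial.C (h 0) * Polynomial.X ^ (n + 1), ?_⟩
    filter_upwards [hP] with z hz
    simp [← hz, hf₁]

lemma finite_reps (L L' : PeriodPair) (hle : L.lattice ≤ L'.lattice) :
    ∃ W : Finset ℂ, (∀ w ∈ W, w ∈ L'.lattice ∧ w ∉ L.lattice) ∧
      ∀ x ∈ L'.lattice, x ∉ L.lattice → ∃ w ∈ W, x - w ∈ L.lattice := by
  classical
  have hd : DiscreteTopology (L'.lattice : Set ℂ) :=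
    (inferInstance : DiscreteTopology L'.lattice)
  have fin : (ZSpan.fundamentalDomain L.basis ∩ (L'.lattice : Set ℂ)).Finite :=
    Metric.finite_isBounded_inter_isClosed DiscreteTopology.isDiscrete
      (ZSpan.fundamentalDomain_isBounded L.basis) L'.isClosed_lattice
  refine ⟨fin.toFinset.filter (fun w => w ∉ L.lattice), ?_, ?_⟩
  · intro w hw
    simp at hw
    exact ⟨hw.1.2, hw.2⟩
  · intro x hx hxL
    have hfl : x - ZSpan.fract L.basis x ∈ L.lattice := by
      rw [L.lattice_eq_span_range_basis, ZSpan.fract_apply, sub_sub_cancel]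
      exact (ZSpan.floor L.basis x).2
    refine ⟨ZSpan.fract L.basis x, ?_, hfl⟩
    simp only [Finset.mem_filter, Set.Finite.mem_toFinset, Set.mem_inter_iff, SetLike.mem_coe]
    refine ⟨⟨ZSpan.fract_mem_fundamentalDomain _ _, ?_⟩, ?_⟩
    · have := L'.lattice.sub_mem hx (hle hfl)
      simpa using this
    · intro h
      apply hxL
      have := L.lattice.add_mem hfl h
      simpa using this

lemma exists_rel (L L' : PeriodPair) (hle : L.lattice ≤ L'.lattice) :
    ∃ (D : ℕ) (p q : ℕ → ℂ) (j : ℕ), j ≤ D ∧ q j ≠ 0 ∧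
      ∀ᶠ z in 𝓝[≠] (0 : ℂ), ∑ i ∈ Finset.range (D + 1), p i * L.weierstrassP z ^ i =
      (∑ i ∈ Finset.range (D + 1), q i * L.weierstrassP z ^ i) * L'.weierstrassP z := by
  classical
  obtain ⟨W, hW, hrep⟩ := finite_reps L L' hle
  set Q : Polynomial ℂ := ∏ w ∈ W, (Polynomial.X - Polynomial.C (L.weierstrassP w)) ^ 2 with hQ
  have hQ0 : Q ≠ 0 := by
    rw [hQ, Finset.prod_ne_zero_iff]
    intro w _
    exact pow_ne_zero _ (Polynomial.X_sub_C_ne_zero _)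
  have hQan : ∀ (R : Polynomial ℂ) (g : ℂ → ℂ) (x : ℂ), AnalyticAt ℂ g x →
      AnalyticAt ℂ (fun z => R.eval (g z)) x := by
    intro R g x hg
    simp only [Polynomial.eval_eq_sum_range]
    fun_prop
  obtain ⟨P, hP⟩ := even_poly L (Q.natDegree + 1)
    (fun z => Q.eval (L.weierstrassP z) * L'.weierstrassP z)
    (fun z l hl => by
      rw [L.weierstrassP_add_coe z ⟨l, hl⟩, L'.weierstrassP_add_coe z ⟨l, hle hl⟩])
    (fun z => by simp)
    (fun x hx => by
      have hLan := L.analyticOnNhd_weierstrassP x hx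
      by_cases hx' : x ∈ L'.lattice
      · obtain ⟨w, hw, hxw⟩ := hrep x hx' hx
        have hc : L.weierstrassP x = L.weierstrassP w := by
          have := L.weierstrassP_add_coe w ⟨_, hxw⟩
          simpa using this
        obtain ⟨Q₁, hQ₁⟩ : (Polynomial.X - Polynomial.C (L.weierstrassP x)) ^ 2 ∣ Q := by
          rw [hc]
          exact Finset.dvd_prod_of_mem
            (fun w => (Polynomial.X - Polynomial.C (L.weierstrassP w)) ^ 2) hw
        obtain ⟨k, hk, ek⟩ := an_factor (g := fun z => L.weierstrassP z - L.weierstrassP x)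
          (x := x) (by fun_prop) (by simp)
        refine ⟨fun z => Q₁.eval (L.weierstrassP z) * k z ^ 2 *
          ((z - x) ^ 2 * (L'.weierstrassPExcept x z - 1 / x ^ 2) + 1), ?_, ?_⟩
        · have h1 := hQan Q₁ _ x hLan
          have h2 := L'.analyticAt_weierstrassPExcept x
          fun_prop
        · filter_upwards [mem_nhdsWithin_of_mem_nhds ek, self_mem_nhdsWithin] with z hz hzx
          have hzx : z - x ≠ 0 := sub_ne_zero.2 hzx
          have h3 := L'.weierstrassPExcept_add ⟨x, hx'⟩ z
          simp only at h3
          rw [hQ₁, ← h3]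
          simp only [Polynomial.eval_mul, Polynomial.eval_pow, Polynomial.eval_sub,
            Polynomial.eval_X, Polynomial.eval_C]
          have hz : L.weierstrassP z - L.weierstrassP x = (z - x) * k z := hz
          rw [hz]
          have : (z - x) ^ 2 * (1 / (z - x) ^ 2) = 1 := by field_simp
          linear_combination (Polynomial.eval (L.weierstrassP z) Q₁ * k z ^ 2) * this
      · refine ⟨_, (hQan Q _ x hLan).fun_mul (L'.analyticOnNhd_weierstrassP x hx'),
          EventuallyEq.rfl⟩)
    (by
      refine ⟨fun z => ∑ i ∈ Finset.range (Q.natDegree + 1),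
        Q.coeff i * (afun L z ^ i * z ^ (2 * (Q.natDegree - i)) * afun L' z), ?_, ?_⟩
      · have := afun_an L
        have := afun_an L'
        fun_prop
      · filter_upwards [self_mem_nhdsWithin] with z hz
        rw [ssum_val L _ _ _ hz, afun_eq L' hz, Polynomial.eval_eq_sum_range]
        ring)
  refine ⟨max P.natDegree Q.natDegree, P.coeff, Q.coeff, Q.natDegree, le_max_right _ _,
    by simpa using hQ0, ?_⟩
  filter_upwards [hP] with z hz
  rw [← Polynomial.eval_eq_sum_range' (by omega), ← Polynomial.eval_eq_sum_range' (by omega), hz]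

lemma tendsto_P (L : PeriodPair) :
    Tendsto L.weierstrassP (𝓝[≠] 0) (Bornology.cobounded ℂ) := by
  rw [tendsto_cobounded_iff_meromorphicOrderAt_neg (L.meromorphic_weierstrassP 0),
    L.order_weierstrassP 0 (zero_mem _)]
  decide

lemma rel_le (M M' : PeriodPair) (D : ℕ) (p q : ℕ → ℂ) (j : ℕ) (hj : j ≤ D) (hq : q j ≠ 0)
    (h : ∀ᶠ z in 𝓝[≠] (0 : ℂ), ∑ i ∈ Finset.range (D + 1), p i * M.weierstrassP z ^ i =
      (∑ i ∈ Finset.range (D + 1), q i * M.weierstrassP z ^ i) * M'.weierstrassP z) :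
    M.lattice ≤ M'.lattice := by
  intro m hm
  by_contra hm'
  set U : Set ℂ := ((M.lattice : Set ℂ) ∪ M'.lattice)ᶜ with hU
  have hUo : IsOpen U := (M.isClosed_lattice.union M'.isClosed_lattice).isOpen_compl
  have hUc : IsPreconnected U := by
    refine (Set.Countable.isConnected_compl_of_one_lt_rank (by simp) ?_).isPreconnected
    exact (countable_of_Lindelof_of_discrete (X := M.lattice)).to_set.union
      (countable_of_Lindelof_of_discrete (X := M'.lattice)).to_set
  have hM : ∀ x ∈ U, AnalyticAt ℂ M.weierstrassP x := fun x hx =>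
    M.analyticOnNhd_weierstrassP x (fun h => hx (Or.inl h))
  have hM' : ∀ x ∈ U, AnalyticAt ℂ M'.weierstrassP x := fun x hx =>
    M'.analyticOnNhd_weierstrassP x (fun h => hx (Or.inr h))
  obtain ⟨z₀, hz₀, hz₀U⟩ : ∃ z₀, (∀ᶠ z in 𝓝 z₀,
      ∑ i ∈ Finset.range (D + 1), p i * M.weierstrassP z ^ i =
      (∑ i ∈ Finset.range (D + 1), q i * M.weierstrassP z ^ i) * M'.weierstrassP z) ∧ z₀ ∈ U := by
    have h1 := eventually_nhdsNE_eventually_nhds_iff.2 h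
    obtain ⟨z₀, a, b, c⟩ := (h1.and ((ev_notMem M).and (ev_notMem M'))).exists
    exact ⟨z₀, a, fun h => h.elim b c⟩
  have hEq := AnalyticOnNhd.eqOn_of_preconnected_of_eventuallyEq (𝕜 := ℂ)
    (f := fun z => ∑ i ∈ Finset.range (D + 1), p i * M.weierstrassP z ^ i)
    (g := fun z => (∑ i ∈ Finset.range (D + 1), q i * M.weierstrassP z ^ i) * M'.weierstrassP z)
    (U := U)
    (fun x hx => by have := hM x hx; fun_prop)
    (fun x hx => by have := hM x hx; have := hM' x hx; fun_prop) hUc hz₀U hz₀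
  -- the polynomial
  set Q : Polynomial ℂ := ∑ i ∈ Finset.range (D + 1), Polynomial.C (q i) * Polynomial.X ^ i with hQ
  have hQe : ∀ x, Q.eval x = ∑ i ∈ Finset.range (D + 1), q i * x ^ i := by
    intro x; simp [hQ, Polynomial.eval_finsetSum]
  have hQ0 : Q ≠ 0 := by
    intro h0
    have : Q.coeff j = q j := by
      simp [hQ, Polynomial.finsetSum_coeff, Polynomial.coeff_X_pow]
      omega
    rw [h0] at this
    exact hq (by simpa using this.symm)
  have hQne : ∀ᶠ z in 𝓝[≠] (0 : ℂ), Q.eval (M.weierstrassP z) ≠ 0 := by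
    have hb : Bornology.IsBounded {x | Q.IsRoot x} := (Polynomial.finite_setOfPred_isRoot hQ0).isBounded
    exact (tendsto_P M).eventually (Bornology.IsBounded.compl hb : _)
  have hmem : ∀ᶠ z in 𝓝[≠] (0 : ℂ), z + m ∉ M'.lattice := by
    have : ∀ᶠ z in 𝓝 (0 : ℂ), z + m ∈ (M'.lattice : Set ℂ)ᶜ := by
      have hc : Tendsto (fun z : ℂ => z + m) (𝓝 0) (𝓝 (0 + m)) :=
        (continuous_id.add continuous_const).tendsto _
      rw [zero_add] at hc
      exact hc.eventually (M'.isClosed_lattice.isOpen_compl.mem_nhds hm')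
    exact this.filter_mono nhdsWithin_le_nhds
  have e : ∀ᶠ z in 𝓝[≠] (0 : ℂ), M'.weierstrassP z = M'.weierstrassP (z + m) := by
    filter_upwards [hmem, hQne, ev_notMem M, ev_notMem M'] with z h1 h2 h3 h4
    have a := hEq (x := z) (fun h => h.elim h3 h4)
    have b := hEq (x := z + m) (fun h => h.elim (fun h => h3 (by
      simpa using M.lattice.sub_mem h hm)) h1)
    simp only [M.weierstrassP_add_coe z ⟨m, hm⟩] at a b
    rw [a, ← hQe] at b
    exact mul_left_cancel₀ h2 b
  have t : Tendsto M'.weierstrassP (𝓝[≠] 0) (𝓝 (M'.weierstrassP m)) := by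
    have hc : Tendsto (fun z : ℂ => z + m) (𝓝 0) (𝓝 (0 + m)) :=
      (continuous_id.add continuous_const).tendsto _
    rw [zero_add] at hc
    have := (M'.analyticOnNhd_weierstrassP m hm').continuousAt.tendsto.comp hc
    exact (this.mono_left nhdsWithin_le_nhds).congr' (e.mono fun z hz => hz.symm)
  exact t.not_tendsto (Metric.disjoint_nhds_cobounded _) (tendsto_P M')

theorem key {k : Type*} [Field k] (ι₁ ι₂ : k →+* ℂ) (L L' M M' : PeriodPair) (a b a' b' : k)
    (h1 : L.g₂ = ι₁ a) (h2 : L.g₃ = ι₁ b) (h3 : L'.g₂ = ι₁ a') (h4 : L'.g₃ = ι₁ b')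
    (h5 : M.g₂ = ι₂ a) (h6 : M.g₃ = ι₂ b) (h7 : M'.g₂ = ι₂ a') (h8 : M'.g₃ = ι₂ b')
    (hle : L.lattice ≤ L'.lattice) : M.lattice ≤ M'.lattice := by
  have aux : ∀ (L M : PeriodPair) (a b : k), L.g₂ = ι₁ a → L.g₃ = ι₁ b → M.g₂ = ι₂ a →
      M.g₃ = ι₂ b → ∃ A, PowerSeries.map ι₁ A = Aser L ∧ PowerSeries.map ι₂ A = Aser M := by
    intro L M a b h1 h2 h3 h4
    have e := ODE_Aser L
    rw [h1, h2] at e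
    obtain ⟨A, hA⟩ := ODE_range ι₁ e
    refine ⟨A, hA, ?_⟩
    rw [← hA] at e
    have e2 := ODE_map ι₂ (ODE_of_map ι₁ e)
    have e3 := ODE_Aser M
    rw [h3, h4] at e3
    exact ODE_unique e2 e3
  obtain ⟨A, hA, hA2⟩ := aux L M a b h1 h2 h5 h6
  obtain ⟨A', hA', hA2'⟩ := aux L' M' a' b' h3 h4 h7 h8
  obtain ⟨D, p, q, j, hj, hq, hr⟩ := exists_rel L L' hle
  have s := rel_to_series L L' D p q hr
  rw [← hA, ← hA', show (X : PowerSeries ℂ) ^ 2 = PowerSeries.map ι₁ (X ^ 2) by simp] at s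
  obtain ⟨p', q', s', hq'⟩ := Ssum_descend ι₁ A (X ^ 2) A' D p q s j hq
  have s2 := congrArg (PowerSeries.map ι₂) s'
  rw [← Ssum_map, ← Ssum_map, hA2, hA2', map_pow, PowerSeries.map_X] at s2
  exact rel_le M M' D _ _ j hj (by simpa using hq') (series_to_rel M M' D _ _ s2)

end CMaux

namespace CMaux

lemma G_sub (L : PeriodPair) (Λ : AddSubgroup ℂ) (h : ∀ z, z ∈ L.lattice ↔ z ∈ Λ) (n : ℕ)
    (hn : n ≠ 0) : L.G n = ∑' w : {w : ℂ // w ∈ Λ ∧ w ≠ 0}, ((w : ℂ) ^ n)⁻¹ := by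
  have h1 := tsum_subtype (L.lattice : Set ℂ) (fun z : ℂ => (z ^ n)⁻¹)
  have h2 := tsum_subtype {w : ℂ | w ∈ Λ ∧ w ≠ 0} (fun z : ℂ => (z ^ n)⁻¹)
  refine h1.trans (Eq.trans ?_ h2.symm)
  congr 1
  ext z
  classical
  rw [Set.indicator_apply, Set.indicator_apply]
  by_cases hz : z = 0
  · simp [hz, hn]
  · simp [hz, h z]

lemma to_pp (Λ : AddSubgroup ℂ) (hd : DiscreteTopology Λ)
    (hs : Submodule.span ℝ (Λ : Set ℂ) = ⊤) :
    ∃ L : PeriodPair, (∀ z, z ∈ L.lattice ↔ z ∈ Λ) ∧ L.g₂ = g₂ Λ ∧ L.g₃ = g₃ Λ := by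
  let E : Submodule ℤ ℂ := AddSubgroup.toIntSubmodule Λ
  have hd' : DiscreteTopology E := hd
  have hz : IsZLattice ℝ E := ⟨hs⟩
  have : Module.Finite ℤ E := ZLattice.module_finite ℝ E
  have : Module.Free ℤ E := ZLattice.module_free ℝ E
  have hr : Module.finrank ℤ E = 2 := by
    rw [ZLattice.rank ℝ E, Complex.finrank_real_complex]
  let b : Module.Basis (Fin 2) ℤ E := Module.finBasisOfFinrankEq ℤ E hr
  let B := b.ofZLatticeBasis ℝ E
  let L : PeriodPair := ⟨B 0, B 1, by
    have e : ![B 0, B 1] = B := by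
      ext i; fin_cases i <;> rfl
    rw [e]; exact B.linearIndependent⟩
  have hL : L.lattice = E := by
    rw [← b.ofZLatticeBasis_span ℝ, PeriodPair.lattice]
    congr 1
    ext z
    simp [L, B, Fin.exists_fin_two, eq_comm]
  have hm : ∀ z, z ∈ L.lattice ↔ z ∈ Λ := fun z => by rw [hL]; rfl
  refine ⟨L, hm, ?_, ?_⟩
  · rw [PeriodPair.g₂, G_sub L Λ hm 4 (by norm_num), g₂]
  · rw [PeriodPair.g₃, G_sub L Λ hm 6 (by norm_num), g₃]

lemma scale_pp (L : PeriodPair) (x : ℂ) (hx : x ≠ 0) :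
    ∃ L' : PeriodPair, (∀ z, x * z ∈ L'.lattice ↔ z ∈ L.lattice) ∧
      L'.g₂ = (x ^ 4)⁻¹ * L.g₂ ∧ L'.g₃ = (x ^ 6)⁻¹ * L.g₃ := by
  let L' : PeriodPair := ⟨x * L.ω₁, x * L.ω₂, by
    have := L.indep.map' (LinearMap.mulLeft ℝ x)
      (LinearMap.ker_eq_bot.2 (mul_right_injective₀ hx))
    have e : ![x * L.ω₁, x * L.ω₂] = LinearMap.mulLeft ℝ x ∘ ![L.ω₁, L.ω₂] := by
      ext i; fin_cases i <;> rfl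
    rw [e]; exact this⟩
  have hm : ∀ z, x * z ∈ L'.lattice ↔ z ∈ L.lattice := by
    intro z
    rw [PeriodPair.mem_lattice, PeriodPair.mem_lattice]
    refine exists_congr fun m => exists_congr fun n => ?_
    rw [← mul_right_inj' hx (b := m * L.ω₁ + n * L.ω₂)]
    simp only [L']
    rw [mul_add, mul_left_comm, mul_left_comm x (n : ℂ)]
  have hG : ∀ n, L'.G n = (x ^ n)⁻¹ * L.G n := by
    intro n
    let e : L.lattice ≃ L'.lattice :=
      { toFun := fun z => ⟨x * z, (hm z).2 z.2⟩
        invFun := fun z => ⟨x⁻¹ * z, (hm _).1 (by rw [mul_inv_cancel_left₀ hx]; exact z.2)⟩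
        left_inv := fun z => by ext; simp [hx]
        right_inv := fun z => by ext; simp [hx] }
    rw [PeriodPair.G, PeriodPair.G, ← tsum_mul_left, ← e.tsum_eq]
    refine tsum_congr fun z => ?_
    simp [e, mul_pow, mul_comm]
  refine ⟨L', hm, ?_, ?_⟩
  · rw [PeriodPair.g₂, PeriodPair.g₂, hG]; ring
  · rw [PeriodPair.g₃, PeriodPair.g₃, hG]; ring

theorem key_scale {k : Type*} [Field k] (ι₁ ι₂ : k →+* ℂ) (Λ Λ' M M' : AddSubgroup ℂ)
    (d1 : DiscreteTopology Λ) (d2 : DiscreteTopology Λ')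
    (d3 : DiscreteTopology M) (d4 : DiscreteTopology M')
    (s1 : Submodule.span ℝ (Λ : Set ℂ) = ⊤) (s2 : Submodule.span ℝ (Λ' : Set ℂ) = ⊤)
    (s3 : Submodule.span ℝ (M : Set ℂ) = ⊤) (s4 : Submodule.span ℝ (M' : Set ℂ) = ⊤)
    (a b a' b' : k)
    (h1 : g₂ Λ = ι₁ a) (h2 : g₃ Λ = ι₁ b) (h3 : g₂ Λ' = ι₁ a') (h4 : g₃ Λ' = ι₁ b')
    (h5 : g₂ M = ι₂ a) (h6 : g₃ M = ι₂ b) (h7 : g₂ M' = ι₂ a') (h8 : g₃ M' = ι₂ b')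
    (x : k) (hx : ∀ z ∈ Λ, ι₁ x * z ∈ Λ') : ∀ z ∈ M, ι₂ x * z ∈ M' := by
  by_cases hx0 : x = 0
  · intro z _; simp [hx0]
  obtain ⟨L, hL, e1, e2⟩ := to_pp Λ d1 s1
  obtain ⟨L', hL', e3, e4⟩ := to_pp Λ' d2 s2
  obtain ⟨P, hP, e5, e6⟩ := to_pp M d3 s3
  obtain ⟨P', hP', e7, e8⟩ := to_pp M' d4 s4
  have hx1 : ι₁ x ≠ 0 := by simpa using hx0
  have hx2 : ι₂ x ≠ 0 := by simpa using hx0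
  obtain ⟨S, hS, f1, f2⟩ := scale_pp L _ hx1
  obtain ⟨T, hT, f3, f4⟩ := scale_pp P _ hx2
  have := key ι₁ ι₂ S L' T P' ((x ^ 4)⁻¹ * a) ((x ^ 6)⁻¹ * b) a' b'
    (by simp [f1, e1, h1]) (by simp [f2, e2, h2]) (by simp [e3, h3]) (by simp [e4, h4])
    (by simp [f3, e5, h5]) (by simp [f4, e6, h6]) (by simp [e7, h7]) (by simp [e8, h8])
    (fun z hz => by
      rw [hL']
      have hz' := (hS ((ι₁ x)⁻¹ * z)).1 (by rwa [mul_inv_cancel_left₀ hx1])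
      have := hx _ ((hL _).1 hz')
      rwa [mul_inv_cancel_left₀ hx1] at this)
  intro z hz
  exact (hP' _).1 (this ((hT z).2 ((hP z).2 hz)))

theorem key_scale_comm {k : Type*} [CommRing k] (hk : IsField k) (ι₁ ι₂ : k →+* ℂ) (Λ Λ' M M' : AddSubgroup ℂ)
    (d1 : DiscreteTopology Λ) (d2 : DiscreteTopology Λ')
    (d3 : DiscreteTopology M) (d4 : DiscreteTopology M')
    (s1 : Submodule.span ℝ (Λ : Set ℂ) = ⊤) (s2 : Submodule.span ℝ (Λ' : Set ℂ) = ⊤)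
    (s3 : Submodule.span ℝ (M : Set ℂ) = ⊤) (s4 : Submodule.span ℝ (M' : Set ℂ) = ⊤)
    (a b a' b' : k)
    (h1 : g₂ Λ = ι₁ a) (h2 : g₃ Λ = ι₁ b) (h3 : g₂ Λ' = ι₁ a') (h4 : g₃ Λ' = ι₁ b')
    (h5 : g₂ M = ι₂ a) (h6 : g₃ M = ι₂ b) (h7 : g₂ M' = ι₂ a') (h8 : g₃ M' = ι₂ b')
    (x : k) (hx : ∀ z ∈ Λ, ι₁ x * z ∈ Λ') : ∀ z ∈ M, ι₂ x * z ∈ M' := by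
  let _ : Field k := hk.toField
  exact key_scale ι₁ ι₂ Λ Λ' M M' d1 d2 d3 d4 s1 s2 s3 s4 a b a' b' h1 h2 h3 h4 h5 h6 h7 h8 x hx

end CMaux

/-- Let `Λ` be a CM lattice with algebraic `g₂, g₃`, `𝔞` a nonzero fractional
ideal (with `g₂ (𝔞Λ)`, `g₃ (𝔞Λ)` algebraic), `σ` an automorphism of `ℚ̄` (the integral closure
of `ℚ` in `ℂ`), `M` a lattice with `gₖ(M) = σ(gₖ(Λ))` and `N` a lattice with
`gₖ(N) = σ(gₖ(𝔞Λ))`.  Then `N = σ(𝔞)·M`, the additive subgroup generated by the elements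
`σ(τ(a))·m`, `a ∈ 𝔞`, `m ∈ M`. -/
theorem stmt_5
    (K : Type*) [Field K] [NumberField K]
    (hdeg : Module.finrank ℚ K = 2)
    (hcplx : IsEmpty (K →+* ℝ))
    (τ : K →+* ℂ)
    (σ : integralClosure ℚ ℂ ≃+* integralClosure ℚ ℂ)
    (Λ M N : AddSubgroup ℂ)
    (hdiscΛ : DiscreteTopology Λ) (hdiscM : DiscreteTopology M)
    (hdiscN : DiscreteTopology N)
    (hspanΛ : Submodule.span ℝ (Λ : Set ℂ) = ⊤)
    (hspanM : Submodule.span ℝ (M : Set ℂ) = ⊤)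
    (hspanN : Submodule.span ℝ (N : Set ℂ) = ⊤)
    (hCM : {z : ℂ | ∀ w ∈ Λ, z * w ∈ Λ} =
      Set.range fun a : 𝓞 K => τ (algebraMap (𝓞 K) K a))
    (𝔞 : FractionalIdeal (nonZeroDivisors (𝓞 K)) K) (h𝔞 : 𝔞 ≠ 0)
    (h2Λ : g₂ Λ ∈ integralClosure ℚ ℂ) (h3Λ : g₃ Λ ∈ integralClosure ℚ ℂ)
    (h2aΛ : g₂ (idealMul τ 𝔞 (Λ : Set ℂ)) ∈ integralClosure ℚ ℂ)
    (h3aΛ : g₃ (idealMul τ 𝔞 (Λ : Set ℂ)) ∈ integralClosure ℚ ℂ)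
    (hM2 : g₂ M = (σ ⟨g₂ Λ, h2Λ⟩ : ℂ)) (hM3 : g₃ M = (σ ⟨g₃ Λ, h3Λ⟩ : ℂ))
    (hN2 : g₂ N = (σ ⟨g₂ (idealMul τ 𝔞 (Λ : Set ℂ)), h2aΛ⟩ : ℂ))
    (hN3 : g₃ N = (σ ⟨g₃ (idealMul τ 𝔞 (Λ : Set ℂ)), h3aΛ⟩ : ℂ)) :
    N = AddSubgroup.closure
      {x : ℂ | ∃ a ∈ 𝔞, ∃ m ∈ M, ∃ h : τ a ∈ integralClosure ℚ ℂ,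
        x = (σ ⟨τ a, h⟩ : ℂ) * m} := by
  have hint : ∀ a : K, τ a ∈ integralClosure ℚ ℂ := by
    intro a
    have : IsIntegral ℚ a := Algebra.IsIntegral.isIntegral a
    exact this.map (τ.toRatAlgHom)
  set J : AddSubgroup ℂ := idealMul τ 𝔞 (Λ : Set ℂ) with hJ
  have hR : ∀ r : 𝓞 K, ∀ w ∈ Λ, τ (algebraMap (𝓞 K) K r) * w ∈ Λ := by
    intro r
    have : τ (algebraMap (𝓞 K) K r) ∈ {z : ℂ | ∀ w ∈ Λ, z * w ∈ Λ} := by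
      rw [hCM]; exact ⟨r, rfl⟩
    exact this
  have haJ : ∀ a ∈ 𝔞, ∀ w ∈ Λ, τ a * w ∈ J := fun a ha w hw =>
    AddSubgroup.subset_closure ⟨a, ha, w, hw, rfl⟩
  -- elements of K mapping 𝔞 into the ring of integers map J into Λ
  have hbJ : ∀ b : K, (∀ a ∈ 𝔞, ∃ r : 𝓞 K, algebraMap (𝓞 K) K r = b * a) →
      ∀ z ∈ J, τ b * z ∈ Λ := by
    intro b hb z hz
    refine AddSubgroup.closure_induction (p := fun z _ => τ b * z ∈ Λ) ?_ ?_ ?_ ?_ hz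
    · rintro _ ⟨a, ha, s, hs, rfl⟩
      obtain ⟨r, hr⟩ := hb a ha
      rw [← mul_assoc, ← map_mul, ← hr]
      exact hR r s hs
    · simp
    · intro x y _ _ hx hy
      rw [mul_add]; exact Λ.add_mem hx hy
    · intro x _ hx
      rw [mul_neg]; exact Λ.neg_mem hx
  have hbinv : ∀ b ∈ 𝔞⁻¹, ∀ a ∈ 𝔞, ∃ r : 𝓞 K, algebraMap (𝓞 K) K r = b * a := by
    intro b hb a ha
    have := (FractionalIdeal.mem_inv_iff h𝔞).1 hb a ha
    simpa using (FractionalIdeal.mem_one_iff (nonZeroDivisors (𝓞 K))).1 this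
  obtain ⟨a₀, ha₀, ha₀0⟩ : ∃ a ∈ 𝔞, a ≠ 0 := by
    by_contra! H
    exact h𝔞 (FractionalIdeal.eq_zero_iff.2 H)
  obtain ⟨b₀, hb₀, hb₀0⟩ : ∃ b ∈ 𝔞⁻¹, b ≠ 0 := by
    by_contra! H
    exact inv_ne_zero h𝔞 (FractionalIdeal.eq_zero_iff.2 H)
  have hdJ : DiscreteTopology J := by
    have hne : τ b₀ ≠ 0 := by simpa using hb₀0
    refine DiscreteTopology.of_continuous_injective
      (f := fun z : J => (⟨τ b₀ * z, hbJ b₀ (hbinv b₀ hb₀) z z.2⟩ : Λ)) ?_ ?_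
    · fun_prop
    · intro x y hxy
      have := congrArg (Subtype.val) hxy
      exact Subtype.ext (mul_left_cancel₀ hne this)
  have hsJ : Submodule.span ℝ (J : Set ℂ) = ⊤ := by
    have hne : τ a₀ ≠ 0 := by simpa using ha₀0
    rw [eq_top_iff]
    intro z _
    have h1 : (τ a₀)⁻¹ * z ∈ Submodule.span ℝ (Λ : Set ℂ) := by rw [hspanΛ]; trivial
    have h2 := Submodule.mem_map_of_mem (f := LinearMap.mulLeft ℝ (τ a₀)) h1
    rw [Submodule.map_span] at h2
    simp only [LinearMap.mulLeft_apply, mul_inv_cancel_left₀ hne] at h2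
    refine Submodule.span_mono ?_ h2
    rintro _ ⟨w, hw, rfl⟩
    exact haJ a₀ ha₀ w hw
  have hf : IsField (integralClosure ℚ ℂ) := 
    isField_of_isIntegral_of_isField' (R := ℚ) (Field.toIsField ℚ)
  let ι₁ : integralClosure ℚ ℂ →+* ℂ := (integralClosure ℚ ℂ).val.toRingHom
  let ι₂ : integralClosure ℚ ℂ →+* ℂ := ι₁.comp σ.toRingHom
  have k1 : ∀ a ∈ 𝔞, ∀ m ∈ M, (σ ⟨τ a, hint a⟩ : ℂ) * m ∈ N := fun a ha =>
    CMaux.key_scale_comm hf ι₁ ι₂ Λ J M N hdiscΛ hdJ hdiscM hdiscN hspanΛ hsJ hspanM hspanN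
      ⟨g₂ Λ, h2Λ⟩ ⟨g₃ Λ, h3Λ⟩ ⟨g₂ J, h2aΛ⟩ ⟨g₃ J, h3aΛ⟩ rfl rfl rfl rfl hM2 hM3 hN2 hN3
      ⟨τ a, hint a⟩ (haJ a ha)
  have k2 : ∀ b ∈ 𝔞⁻¹, ∀ n ∈ N, (σ ⟨τ b, hint b⟩ : ℂ) * n ∈ M := fun b hb =>
    CMaux.key_scale_comm hf ι₁ ι₂ J Λ N M hdJ hdiscΛ hdiscN hdiscM hsJ hspanΛ hspanN hspanM
      ⟨g₂ J, h2aΛ⟩ ⟨g₃ J, h3aΛ⟩ ⟨g₂ Λ, h2Λ⟩ ⟨g₃ Λ, h3Λ⟩ rfl rfl rfl rfl hN2 hN3 hM2 hM3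
      ⟨τ b, hint b⟩ (hbJ b (hbinv b hb))
  let ψ : K →+* ℂ := ι₂.comp (τ.codRestrict (integralClosure ℚ ℂ) hint)
  have hψ : ∀ a, ψ a = (σ ⟨τ a, hint a⟩ : ℂ) := fun a => rfl
  apply le_antisymm
  · intro n hn
    have key : ∀ x ∈ 𝔞 * 𝔞⁻¹, ψ x * n ∈ AddSubgroup.closure
      {x : ℂ | ∃ a ∈ 𝔞, ∃ m ∈ M, ∃ h : τ a ∈ integralClosure ℚ ℂ,
        x = (σ ⟨τ a, h⟩ : ℂ) * m} := by
      intro x hx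
      refine FractionalIdeal.mul_induction_on hx ?_ ?_
      · intro i hi j hj
        rw [map_mul, mul_assoc]
        exact AddSubgroup.subset_closure ⟨i, hi, _, k2 j hj n hn, hint i, rfl⟩
      · intro x y hx hy
        rw [map_add, add_mul]
        exact AddSubgroup.add_mem _ hx hy
    have h1 := key 1 (by
      rw [mul_inv_cancel₀ h𝔞]
      exact FractionalIdeal.one_mem_one _)
    simpa using h1
  · rw [AddSubgroup.closure_le]
    rintro _ ⟨a, ha, m, hm, h, rfl⟩
    exact k1 a ha m hm
end
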